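/- arXiv:2308.12959 — 4 statements merged into one kernel-verified Lean document; each statement's English description precedes it below -/
import Mathlib

section
/- Non-asymptotic AEP upper bound for the smoothed max-relative entropy: Let ρ, σ be states on ℂ^d, γ ∈ (0,1], ε ∈ (0,1) and n ≥ 1. Then (1/n) · D_max^ε(ρ^{⊗n}‖σ^{⊗n}) ≤ D(ρ‖σ) + (4·c_γ(ρ‖σ)/√n) · log(2/ε) + (1/n) · log(1/(1−ε²)) in the extended reals. -/
open scoped Kronecker ComplexOrder

noncomputable section

namespace QCD

attribute [local instance] Classical.propDecidable

variable {n m : Type} [Fintype n] [DecidableEq n] [Fintype m] [DecidableEq m]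

/-- The real part of the trace of a complex matrix. -/
def rtr (A : Matrix n n ℂ) : ℝ := (A.trace).re

/-- A quantum state: positive semidefinite with trace one. -/
def IsState (ρ : Matrix n n ℂ) : Prop := ρ.PosSemidef ∧ ρ.trace = 1

/-- Loewner order: `A ≤ B` iff `B - A` is positive semidefinite. -/
def loewnerLE (A B : Matrix n n ℂ) : Prop := (B - A).PosSemidef

/-- Support containment (for PSD matrices): `ker σ ⊆ ker ρ`. -/
def SuppLE (ρ σ : Matrix n n ℂ) : Prop := ∀ v : n → ℂ, σ.mulVec v = 0 → ρ.mulVec v = 0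

/-- Functional calculus for Hermitian matrices (junk value `0` otherwise). -/
def matFun (f : ℝ → ℝ) (A : Matrix n n ℂ) : Matrix n n ℂ :=
  if hA : A.IsHermitian then
    (hA.eigenvectorUnitary : Matrix n n ℂ) *
      Matrix.diagonal (fun i => (f (hA.eigenvalues i) : ℂ)) *
      (star (hA.eigenvectorUnitary : Matrix n n ℂ))
  else 0

/-- Matrix square root via functional calculus. -/
def msqrt (A : Matrix n n ℂ) : Matrix n n ℂ := matFun Real.sqrt A

/-- Matrix real power taken on the support (`0 ^ t := 0`). -/
def mpow (A : Matrix n n ℂ) (t : ℝ) : Matrix n n ℂ :=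
  matFun (fun x => if x = 0 then 0 else x ^ t) A

/-- Matrix base-2 logarithm on the support. -/
def mlog (A : Matrix n n ℂ) : Matrix n n ℂ := matFun (Real.logb 2) A

/-- Positive part of a Hermitian matrix. -/
def mposPart (A : Matrix n n ℂ) : Matrix n n ℂ := matFun (fun x => max x 0) A

/-- Trace norm. -/
def traceNorm (A : Matrix n m ℂ) : ℝ := rtr (msqrt (A.conjTranspose * A))

/-- Base-2 logarithm as an extended real (`⊥` on nonpositive input). -/
def elog (x : ℝ) : EReal := if x ≤ 0 then ⊥ else ((Real.logb 2 x : ℝ) : EReal)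

/-- Base-2 logarithm of an extended real. -/
def elogE (x : EReal) : EReal := if x = ⊤ then ⊤ else elog x.toReal

/-- `2 ^ x` for an extended real `x`. -/
def epow2 (x : EReal) : EReal :=
  if x = ⊤ then ⊤ else if x = ⊥ then 0 else ((((2:ℝ) ^ x.toReal : ℝ)) : EReal)

/-- Umegaki relative entropy (base 2), `⊤` if the support condition fails. -/
def relEntropy (ρ σ : Matrix n n ℂ) : EReal :=
  if SuppLE ρ σ then ((rtr (ρ * (mlog ρ - mlog σ)) : ℝ) : EReal) else ⊤

/-- Petz–Rényi divergence (base 2). -/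
def petzRenyi (α : ℝ) (ρ σ : Matrix n n ℂ) : EReal :=
  if 1 < α ∧ ¬ SuppLE ρ σ then ⊤
  else (((α - 1)⁻¹ : ℝ) : EReal) * elog (rtr (mpow ρ α * mpow σ (1 - α)))

/-- Geometric (maximal) Rényi divergence (base 2). -/
def geomRenyi (α : ℝ) (ρ σ : Matrix n n ℂ) : EReal :=
  if SuppLE ρ σ then
    (((α - 1)⁻¹ : ℝ) : EReal) *
      elog (rtr (σ * mpow (mpow σ (-(1/2 : ℝ)) * ρ * mpow σ (-(1/2 : ℝ))) α))
  else ⊤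

/-- Max-relative entropy (base 2). -/
def dMax (ρ σ : Matrix n n ℂ) : EReal :=
  sInf {x : EReal | ∃ lam : ℝ, x = (lam : EReal) ∧ loewnerLE ρ ((((2:ℝ) ^ lam : ℝ) : ℂ) • σ)}

/-- Uhlmann fidelity. -/
def fidelity (ρ σ : Matrix n n ℂ) : ℝ := (rtr (msqrt (msqrt σ * ρ * msqrt σ))) ^ 2

/-- Sine (purified) distance. -/
def sineDist (ρ σ : Matrix n n ℂ) : ℝ := Real.sqrt (1 - fidelity ρ σ)

/-- Smoothed max-relative entropy: smoothing over states in the sine-distance ball. -/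
def dMaxSmooth (δ : ℝ) (ρ σ : Matrix n n ℂ) : EReal :=
  ⨅ (ρ' : Matrix n n ℂ) (_ : IsState ρ' ∧ sineDist ρ ρ' ≤ δ), dMax ρ' σ

/-- Hypothesis testing divergence (base 2). -/
def dH (ε : ℝ) (ρ σ : Matrix n n ℂ) : EReal :=
  - elog (sInf {x : ℝ | ∃ T : Matrix n n ℂ,
      T.PosSemidef ∧ ((1 : Matrix n n ℂ) - T).PosSemidef ∧ 1 - ε ≤ rtr (T * ρ) ∧ x = rtr (T * σ)})

/-- The quantity `c_γ(ρ‖σ)`. -/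
def cGamma (γ : ℝ) (ρ σ : Matrix n n ℂ) : EReal :=
  ((γ⁻¹ : ℝ) : EReal) *
    elogE (epow2 ((γ : ℝ) * petzRenyi (1 + γ) ρ σ) +
           epow2 (((-γ : ℝ) : EReal) * petzRenyi (1 - γ) ρ σ) + 1)

/-- Binary entropy (base 2). -/
def binEnt (x : ℝ) : ℝ := -(x * Real.logb 2 x) - (1 - x) * Real.logb 2 (1 - x)

/-- Action of `id_k ⊗ Φ` on block matrices. -/
def blockApply {k : Type} (Φ : Matrix n n ℂ →ₗ[ℂ] Matrix m m ℂ)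
    (M : Matrix (k × n) (k × n) ℂ) : Matrix (k × m) (k × m) ℂ :=
  Matrix.of fun p q => Φ (Matrix.of fun a b => M (p.1, a) (q.1, b)) p.2 q.2

/-- Action of `Φ ⊗ id_k` on block matrices. -/
def blockApplyRight {k : Type} (Φ : Matrix n n ℂ →ₗ[ℂ] Matrix m m ℂ)
    (M : Matrix (n × k) (n × k) ℂ) : Matrix (m × k) (m × k) ℂ :=
  Matrix.of fun p q => Φ (Matrix.of fun a b => M (a, p.2) (b, q.2)) p.1 q.1

/-- Quantum channel: trace preserving and completely positive. -/
def IsQChannel (Φ : Matrix n n ℂ →ₗ[ℂ] Matrix m m ℂ) : Prop :=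
  (∀ M : Matrix n n ℂ, (Φ M).trace = M.trace) ∧
  (∀ k : ℕ, 1 ≤ k → ∀ M : Matrix (Fin k × n) (Fin k × n) ℂ, M.PosSemidef →
    (blockApply Φ M).PosSemidef)

/-- `id_k ⊗ Φ` as a linear map. -/
def blockApplyL (k : Type) (Φ : Matrix n n ℂ →ₗ[ℂ] Matrix m m ℂ) :
    Matrix (k × n) (k × n) ℂ →ₗ[ℂ] Matrix (k × m) (k × m) ℂ where
  toFun := blockApply Φ
  map_add' M N := by
    ext p q
    show Φ (Matrix.of fun a b => (M + N) (p.1, a) (q.1, b)) p.2 q.2 = _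
    have h : (Matrix.of fun a b => (M + N) (p.1, a) (q.1, b)) =
        (Matrix.of fun a b => M (p.1, a) (q.1, b)) +
          (Matrix.of fun a b => N (p.1, a) (q.1, b)) := rfl
    rw [h, map_add]
    rfl
  map_smul' c M := by
    ext p q
    show Φ (Matrix.of fun a b => (c • M) (p.1, a) (q.1, b)) p.2 q.2 = _
    have h : (Matrix.of fun a b => (c • M) (p.1, a) (q.1, b)) =
        c • (Matrix.of fun a b => M (p.1, a) (q.1, b)) := rfl
    rw [h, map_smul]
    rfl

/-- `Φ ⊗ id_k` as a linear map. -/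
def blockApplyRightL (k : Type) (Φ : Matrix n n ℂ →ₗ[ℂ] Matrix m m ℂ) :
    Matrix (n × k) (n × k) ℂ →ₗ[ℂ] Matrix (m × k) (m × k) ℂ where
  toFun := blockApplyRight Φ
  map_add' M N := by
    ext p q
    show Φ (Matrix.of fun a b => (M + N) (a, p.2) (b, q.2)) p.1 q.1 = _
    have h : (Matrix.of fun a b => (M + N) (a, p.2) (b, q.2)) =
        (Matrix.of fun a b => M (a, p.2) (b, q.2)) +
          (Matrix.of fun a b => N (a, p.2) (b, q.2)) := rfl
    rw [h, map_add]
    rfl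
  map_smul' c M := by
    ext p q
    show Φ (Matrix.of fun a b => (c • M) (a, p.2) (b, q.2)) p.1 q.1 = _
    have h : (Matrix.of fun a b => (c • M) (a, p.2) (b, q.2)) =
        c • (Matrix.of fun a b => M (a, p.2) (b, q.2)) := rfl
    rw [h, map_smul]
    rfl

/-- Tensor product of two channels (Kronecker product action). -/
def tensorChannel {n₁ m₁ n₂ m₂ : Type}
    (E₁ : Matrix n₁ n₁ ℂ →ₗ[ℂ] Matrix m₁ m₁ ℂ) (E₂ : Matrix n₂ n₂ ℂ →ₗ[ℂ] Matrix m₂ m₂ ℂ) :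
    Matrix (n₁ × n₂) (n₁ × n₂) ℂ →ₗ[ℂ] Matrix (m₁ × m₂) (m₁ × m₂) ℂ :=
  (blockApplyRightL m₂ E₁).comp (blockApplyL n₁ E₂)

/-- Index type for `k`-fold tensor powers. -/
def tpow (ι : Type) : ℕ → Type
  | 0 => PUnit
  | (k+1) => tpow ι k × ι

def tpowFintype (ι : Type) [Fintype ι] : ∀ k : ℕ, Fintype (tpow ι k)
  | 0 => inferInstanceAs (Fintype PUnit)
  | (k+1) => letI := tpowFintype ι k; inferInstanceAs (Fintype (tpow ι k × ι))

instance (ι : Type) [Fintype ι] (k : ℕ) : Fintype (tpow ι k) := tpowFintype ι k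

def tpowDecEq (ι : Type) [DecidableEq ι] : ∀ k : ℕ, DecidableEq (tpow ι k)
  | 0 => inferInstanceAs (DecidableEq PUnit)
  | (k+1) => letI := tpowDecEq ι k; inferInstanceAs (DecidableEq (tpow ι k × ι))

instance (ι : Type) [DecidableEq ι] (k : ℕ) : DecidableEq (tpow ι k) := tpowDecEq ι k

/-- `k`-fold Kronecker tensor power of a matrix. -/
def tpowMat (ρ : Matrix n n ℂ) : ∀ k : ℕ, Matrix (tpow n k) (tpow n k) ℂ
  | 0 => 1
  | (k+1) => (tpowMat ρ k) ⊗ₖ ρ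

/-- `k`-fold tensor power of a channel. -/
def tpowChannel (Φ : Matrix n n ℂ →ₗ[ℂ] Matrix m m ℂ) :
    ∀ k : ℕ, Matrix (tpow n k) (tpow n k) ℂ →ₗ[ℂ] Matrix (tpow m k) (tpow m k) ℂ
  | 0 => LinearMap.id
  | (k+1) => tensorChannel (tpowChannel Φ k) Φ

/-- Channel divergence induced by a divergence `𝔇` on states:
sup over `k ≥ 1` and input states `ν` on `ℂ^k ⊗ ℂ^d`. -/
def chDiv (𝔇 : ∀ (p : Type) [Fintype p] [DecidableEq p], Matrix p p ℂ → Matrix p p ℂ → EReal)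
    (E F : Matrix n n ℂ →ₗ[ℂ] Matrix m m ℂ) : EReal :=
  ⨆ (k : ℕ) (_ : 1 ≤ k) (ν : Matrix (Fin k × n) (Fin k × n) ℂ) (_ : IsState ν),
    𝔇 (Fin k × m) (blockApply E ν) (blockApply F ν)

/-- The geometric Rényi divergence as a divergence family. -/
def geomD (α : ℝ) : ∀ (p : Type) [Fintype p] [DecidableEq p],
    Matrix p p ℂ → Matrix p p ℂ → EReal :=
  fun _ _ _ => geomRenyi α

/-- The Umegaki relative entropy as a divergence family. -/
def relD : ∀ (p : Type) [Fintype p] [DecidableEq p],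
    Matrix p p ℂ → Matrix p p ℂ → EReal :=
  fun _ _ _ => relEntropy

/-- The hypothesis testing divergence as a divergence family. -/
def dHD (ε : ℝ) : ∀ (p : Type) [Fintype p] [DecidableEq p],
    Matrix p p ℂ → Matrix p p ℂ → EReal :=
  fun _ _ _ => dH ε

/-- Regularized channel relative entropy. -/
def regRelEntropy (E F : Matrix n n ℂ →ₗ[ℂ] Matrix m m ℂ) : EReal :=
  ⨆ (k : ℕ) (_ : 1 ≤ k),
    (((k : ℝ)⁻¹ : ℝ) : EReal) * chDiv relD (tpowChannel E k) (tpowChannel F k)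

end QCD

namespace QCD
open Matrix

variable {ι : Type} [Fintype ι] [DecidableEq ι]

/-- squared Euclidean norm of a vector -/
def nsq (x : ι → ℂ) : ℝ := ∑ i, ‖x i‖ ^ 2

lemma nsq_nonneg (x : ι → ℂ) : 0 ≤ nsq x := by unfold nsq; positivity

lemma star_dot_self (x : ι → ℂ) : star x ⬝ᵥ x = (nsq x : ℂ) := by
  simp only [dotProduct, nsq, Pi.star_apply]
  push_cast
  refine Finset.sum_congr rfl fun i _ => ?_
  exact Complex.conj_mul' (x i)

lemma re_dot_le (x y : ι → ℂ) : (star x ⬝ᵥ y).re ≤ Real.sqrt (nsq x) * Real.sqrt (nsq y) := by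
  refine le_trans ?_ (Real.sum_mul_le_sqrt_mul_sqrt Finset.univ (fun i => ‖x i‖) (fun i => ‖y i‖))
  simp only [dotProduct, Pi.star_apply, Complex.re_sum]
  refine Finset.sum_le_sum fun i _ => ?_
  refine (Complex.re_le_norm _).trans ?_
  simp

lemma re_dot_le' (x y : ι → ℂ) : (star x ⬝ᵥ y).re ≤ (nsq x + nsq y) / 2 := by
  refine (re_dot_le x y).trans ?_
  nlinarith [Real.sq_sqrt (nsq_nonneg x), Real.sq_sqrt (nsq_nonneg y),
    sq_nonneg (Real.sqrt (nsq x) - Real.sqrt (nsq y))]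

/-- operator arithmetic-geometric mean inequality (spectral norm) -/
lemma amgm (S R X M : Matrix ι ι ℂ) (hS : Sᴴ = S) (hR : Rᴴ = R)
    (hM : S * S * X + X * (R * R) = M)
    (hMc : ∀ x y : ι → ℂ, (star x ⬝ᵥ (M *ᵥ y)).re ≤ (nsq x + nsq y) / 2) :
    (((1 / 4 : ℂ) • (1 : Matrix ι ι ℂ)) - (S * X * R) * (S * X * R)ᴴ).PosSemidef := by
  set T := S * X * R with hT
  have hH : (((1 / 4 : ℂ) • (1 : Matrix ι ι ℂ)) - T * Tᴴ).IsHermitian := by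
    refine IsHermitian.sub ?_ (isHermitian_mul_conjTranspose_self T)
    unfold IsHermitian
    rw [conjTranspose_smul, conjTranspose_one]
    congr 1
    simp
  rw [hH.posSemidef_iff_eigenvalues_nonneg]
  intro i
  by_contra hneg
  simp only [Pi.zero_apply, not_le] at hneg
  set η := hH.eigenvalues i with hη
  set w : ι → ℂ := (hH.eigenvectorBasis i).ofLp with hw
  have hw0 : w ≠ 0 := by
    intro h0
    apply hH.eigenvectorBasis.toBasis.ne_zero i
    rw [OrthonormalBasis.coe_toBasis]
    ext j
    exact congrFun h0 j
  have hev := hH.mulVec_eigenvectorBasis i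
  rw [← hw, ← hη, sub_mulVec, smul_mulVec, one_mulVec, ← mulVec_mulVec] at hev
  set κ := Real.sqrt (1 / 4 - η) with hκ
  have hκsq : κ * κ = 1 / 4 - η := Real.mul_self_sqrt (by linarith)
  have hκ0 : 1 / 2 < κ := by
    by_contra h
    nlinarith [Real.sqrt_nonneg (1 / 4 - η)]
  set v := Tᴴ *ᵥ w with hv
  have hTv : T *ᵥ v = ((κ : ℂ) * κ) • w := by
    have : ((κ : ℂ) * κ) = 1 / 4 - (η : ℂ) := by
      have h := congrArg Complex.ofReal hκsq
      push_cast at h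
      exact h
    rw [this, sub_smul]
    have h2 : (η : ℂ) • w = η • w := by ext j; simp
    rw [h2, ← hev]; abel
  set x1 := X *ᵥ (R *ᵥ v) with hx1
  set x2 := (κ : ℂ) • (Xᴴ *ᵥ (S *ᵥ w)) with hx2
  have hSx1 : S *ᵥ x1 = ((κ : ℂ) * κ) • w := by
    rw [← hTv, hT, hx1]; simp only [mulVec_mulVec, Matrix.mul_assoc]
  have hRx2 : R *ᵥ x2 = (κ : ℂ) • v := by
    rw [hx2, mulVec_smul, hv, hT]
    simp only [mulVec_mulVec, conjTranspose_mul, hS, hR, Matrix.mul_assoc]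
  have e1 : (X * (R * R)) *ᵥ x2 = (κ : ℂ) • x1 := by
    rw [← mulVec_mulVec, ← mulVec_mulVec, hRx2, mulVec_smul, mulVec_smul]
  have e2 : (Xᴴ * (S * S)) *ᵥ x1 = (κ : ℂ) • x2 := by
    rw [← mulVec_mulVec, ← mulVec_mulVec, hSx1, mulVec_smul, mulVec_smul, hx2, smul_smul]
  have hx1ne : x1 ≠ 0 := by
    intro h0
    rw [h0, mulVec_zero] at hSx1
    have : ((κ : ℂ) * κ) ≠ 0 := by
      have : (κ : ℂ) ≠ 0 := by exact_mod_cast (by linarith : κ ≠ 0)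
      exact mul_ne_zero this this
    exact hw0 ((smul_eq_zero.mp hSx1.symm).resolve_left this)
  have hpos : 0 < nsq x1 := by
    refine lt_of_le_of_ne (nsq_nonneg _) fun h => hx1ne ?_
    have := star_dot_self x1
    rw [← h] at this
    exact dotProduct_star_self_eq_zero.mp (by rw [dotProduct_comm]; simpa using this)
  have f1 : star x1 ⬝ᵥ ((X * (R * R)) *ᵥ x2) = ((κ * nsq x1 : ℝ) : ℂ) := by
    rw [e1, dotProduct_smul, star_dot_self]; simp
  have f2 : (star x1 ⬝ᵥ ((S * S * X) *ᵥ x2)) = ((κ * nsq x2 : ℝ) : ℂ) := by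
    have h : star x2 ⬝ᵥ ((Xᴴ * (S * S)) *ᵥ x1) = ((κ * nsq x2 : ℝ) : ℂ) := by
      rw [e2, dotProduct_smul, star_dot_self]; simp
    rw [star_dotProduct, star_mulVec, ← dotProduct_mulVec]
    simp only [conjTranspose_mul, hS]
    rw [h]
    simp
  have := hMc x1 x2
  rw [← hM, add_mulVec, dotProduct_add, f1, f2, ← Complex.ofReal_add, Complex.ofReal_re] at this
  nlinarith [nsq_nonneg x2]

section matFun
variable {A : Matrix ι ι ℂ}

lemma matFun_eq (hA : A.IsHermitian) (f : ℝ → ℝ) : matFun f A =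
    (hA.eigenvectorUnitary : Matrix ι ι ℂ) *
      Matrix.diagonal (fun i => (f (hA.eigenvalues i) : ℂ)) *
      (hA.eigenvectorUnitary : Matrix ι ι ℂ)ᴴ := by
  rw [matFun, dif_pos hA]; rfl

lemma eU_left (hA : A.IsHermitian) : (hA.eigenvectorUnitary : Matrix ι ι ℂ)ᴴ *
    (hA.eigenvectorUnitary : Matrix ι ι ℂ) = 1 := Unitary.coe_star_mul_self hA.eigenvectorUnitary

lemma eU_right (hA : A.IsHermitian) : (hA.eigenvectorUnitary : Matrix ι ι ℂ) *
    (hA.eigenvectorUnitary : Matrix ι ι ℂ)ᴴ = 1 := Unitary.coe_mul_star_self hA.eigenvectorUnitary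

lemma matFun_id (hA : A.IsHermitian) : matFun (fun x => x) A = A := by
  rw [matFun_eq hA]
  conv_rhs => rw [hA.spectral_theorem]
  rfl

lemma matFun_one (hA : A.IsHermitian) : matFun (fun _ => 1) A = 1 := by
  rw [matFun_eq hA]
  simp [eU_right hA]

lemma matFun_mul (hA : A.IsHermitian) (f g : ℝ → ℝ) :
    matFun f A * matFun g A = matFun (fun x => f x * g x) A := by
  rw [matFun_eq hA, matFun_eq hA, matFun_eq hA]
  set U := (hA.eigenvectorUnitary : Matrix ι ι ℂ) with hU
  have : ∀ P Q : Matrix ι ι ℂ, (U * P * Uᴴ) * (U * Q * Uᴴ) = U * (P * Q) * Uᴴ := by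
    intro P Q
    calc _ = U * P * (Uᴴ * U) * Q * Uᴴ := by simp only [Matrix.mul_assoc]
      _ = _ := by rw [eU_left hA]; simp only [Matrix.mul_assoc, Matrix.one_mul]
  rw [this, diagonal_mul_diagonal]
  simp

lemma matFun_sub (hA : A.IsHermitian) (f g : ℝ → ℝ) :
    matFun f A - matFun g A = matFun (fun x => f x - g x) A := by
  rw [matFun_eq hA, matFun_eq hA, matFun_eq hA, ← Matrix.sub_mul, ← Matrix.mul_sub, diagonal_sub]
  simp

lemma matFun_herm (hA : A.IsHermitian) (f : ℝ → ℝ) : (matFun f A)ᴴ = matFun f A := by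
  rw [matFun_eq hA]
  simp only [conjTranspose_mul, conjTranspose_conjTranspose, diagonal_conjTranspose,
    Matrix.mul_assoc]
  congr 3
  ext i
  simp

lemma matFun_congr (hA : A.PosSemidef) {f g : ℝ → ℝ} (h : ∀ x, 0 ≤ x → f x = g x) :
    matFun f A = matFun g A := by
  rw [matFun_eq hA.1, matFun_eq hA.1]
  congr 3
  ext i
  rw [h _ (hA.eigenvalues_nonneg i)]

lemma matFun_psd (hA : A.PosSemidef) {f : ℝ → ℝ} (h : ∀ x, 0 ≤ x → 0 ≤ f x) :
    (matFun f A).PosSemidef := by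
  rw [matFun_eq hA.1]
  refine PosSemidef.mul_mul_conjTranspose_same (PosSemidef.diagonal ?_) _
  intro i
  simp only [Pi.zero_apply]
  exact_mod_cast h _ (hA.eigenvalues_nonneg i)

lemma matFun_trace (hA : A.IsHermitian) (f : ℝ → ℝ) :
    (matFun f A).trace = ((∑ i, f (hA.eigenvalues i) : ℝ) : ℂ) := by
  rw [matFun_eq hA, Matrix.trace_mul_comm, ← Matrix.mul_assoc, eU_left hA, Matrix.one_mul,
    trace_diagonal]
  push_cast; rfl

end matFun

lemma mul_conjTranspose_diag (Y : Matrix ι ι ℂ) (k : ι) : (Y * Yᴴ) k k = (nsq (fun l => star (Y k l)) : ℂ) := by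
  rw [← star_dot_self, Matrix.mul_apply]
  simp [dotProduct]

lemma conjTranspose_mul_diag (Y : Matrix ι ι ℂ) (k : ι) : (Yᴴ * Y) k k = (nsq (fun l => Y l k) : ℂ) := by
  rw [← star_dot_self, Matrix.mul_apply]
  simp [dotProduct]

/-- lower bound on the fidelity from factorisations (easy half of Uhlmann). -/
lemma fid_lower (ρ ρ' R L : Matrix ι ι ℂ) (hρ : R * Rᴴ = ρ) (hρ' : L * Lᴴ = ρ') :
    rtr (Rᴴ * L) ≤ rtr (msqrt (msqrt ρ' * ρ * msqrt ρ')) := by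
  have hP : ρ'.PosSemidef := hρ' ▸ posSemidef_self_mul_conjTranspose L
  have hH := hP.1
  set s := msqrt ρ' with hs
  have hsH : sᴴ = s := matFun_herm hH _
  set j := matFun (fun x => (Real.sqrt x)⁻¹) ρ' with hj
  have hjH : jᴴ = j := matFun_herm hH _
  set Z := j * L with hZ
  set Q := matFun (fun x => if x = 0 then 1 else 0) ρ' with hQ
  have hQH : Qᴴ = Q := matFun_herm hH _
  have hQL : Q * L = 0 := by
    rw [← Matrix.self_mul_conjTranspose_eq_zero]
    rw [conjTranspose_mul, Matrix.mul_assoc, ← Matrix.mul_assoc L, hρ', hQH]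
    have hid : ρ' = matFun (fun x => x) ρ' := (matFun_id hH).symm
    rw [show ∀ P : Matrix ι ι ℂ, P * (ρ' * P) = P * (matFun (fun x => x) ρ' * P) by rw [← hid]; simp]
    rw [hQ, matFun_mul hH, matFun_mul hH, ← sub_self (matFun (fun _ => 1) ρ'), matFun_sub hH]
    refine matFun_congr hP fun x _ => ?_
    by_cases hx : x = 0 <;> simp [hx]
  have hsj : s * j = 1 - Q := by
    rw [hs, msqrt, hj, hQ, matFun_mul hH, ← matFun_one hH, matFun_sub hH]
    refine matFun_congr hP fun x hx => ?_
    by_cases hx0 : x = 0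
    · simp [hx0]
    · have : Real.sqrt x ≠ 0 := (Real.sqrt_pos.mpr (lt_of_le_of_ne hx (Ne.symm hx0))).ne'
      simp [hx0, this]
  have hsZ : s * Z = L := by
    rw [hZ, ← Matrix.mul_assoc, hsj, Matrix.sub_mul, hQL]; simp
  have hZZ : Z * Zᴴ = 1 - Q := by
    rw [hZ, conjTranspose_mul, hjH, Matrix.mul_assoc, ← Matrix.mul_assoc L, hρ']
    have hid : ρ' = matFun (fun x => x) ρ' := (matFun_id hH).symm
    rw [show ∀ P : Matrix ι ι ℂ, P * (ρ' * P) = P * (matFun (fun x => x) ρ' * P) by rw [← hid]; simp]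
    rw [hj, hQ, matFun_mul hH, matFun_mul hH, ← matFun_one hH, matFun_sub hH]
    refine matFun_congr hP fun x hx => ?_
    by_cases hx0 : x = 0
    · simp [hx0]
    · have : Real.sqrt x ≠ 0 := (Real.sqrt_pos.mpr (lt_of_le_of_ne hx (Ne.symm hx0))).ne'
      simp only [hx0, if_false]
      field_simp
      rw [Real.sq_sqrt hx]; ring
  have hQP : Q.PosSemidef := matFun_psd hP fun x _ => by split_ifs <;> norm_num
  set K := Rᴴ * s with hK
  have hKK : s * ρ * s = Kᴴ * K := by
    rw [hK, conjTranspose_mul, hsH, conjTranspose_conjTranspose, ← hρ]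
    simp only [Matrix.mul_assoc]
  have hMP : (s * ρ * s).PosSemidef := hKK ▸ posSemidef_conjTranspose_mul_self K
  have hMH := hMP.1
  set E := (hMH.eigenvectorUnitary : Matrix ι ι ℂ) with hE
  have htr : (msqrt (s * ρ * s)).trace = _ := matFun_trace hMH Real.sqrt
  have hlhs : (Rᴴ * L).trace = ∑ k, star (fun l => star ((Eᴴ * Z) k l)) ⬝ᵥ (fun l => (K * E) l k) := by
    have : (Rᴴ * L).trace = ((Eᴴ * Z) * (K * E)).trace := by
      rw [Matrix.trace_mul_comm (Eᴴ * Z), ← hsZ, ← Matrix.mul_assoc, ← hK]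
      rw [show K * E * (Eᴴ * Z) = K * (E * Eᴴ) * Z by simp only [Matrix.mul_assoc], eU_right hMH,
        Matrix.mul_one]
    rw [this]
    simp [Matrix.trace, Matrix.mul_apply (M := Eᴴ * Z), dotProduct]
  unfold rtr
  rw [htr, hlhs, Complex.ofReal_re, Complex.re_sum]
  refine Finset.sum_le_sum fun k _ => (re_dot_le _ _).trans ?_
  have h1 : nsq (fun l => star ((Eᴴ * Z) k l)) ≤ 1 := by
    have h := mul_conjTranspose_diag (Eᴴ * Z) k
    rw [conjTranspose_mul, conjTranspose_conjTranspose, Matrix.mul_assoc, ← Matrix.mul_assoc Z, hZZ,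
      Matrix.sub_mul, Matrix.mul_sub, Matrix.one_mul, eU_left hMH, Matrix.sub_apply,
      Matrix.one_apply_eq, ← Matrix.mul_assoc] at h
    have h2 := (hQP.conjTranspose_mul_mul_same E).diag_nonneg (i := k)
    have h3 := congrArg Complex.re h
    rw [Complex.ofReal_re, Complex.sub_re, Complex.one_re] at h3
    rw [← h3]
    have := (Complex.nonneg_iff.mp h2).1
    linarith
  have h2 : nsq (fun l => (K * E) l k) = hMH.eigenvalues k := by
    have h := conjTranspose_mul_diag (K * E) k
    rw [conjTranspose_mul, Matrix.mul_assoc, ← Matrix.mul_assoc Kᴴ, ← hKK] at h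
    have h3 : Eᴴ * (s * ρ * s * E) = diagonal (fun i => (hMH.eigenvalues i : ℂ)) := by
      have := matFun_eq hMH (fun x => x)
      rw [matFun_id hMH, ← hE] at this
      conv_lhs => rw [this]
      rw [show ∀ P : Matrix ι ι ℂ, Eᴴ * (E * P * Eᴴ * E) = (Eᴴ * E) * P * (Eᴴ * E) by
        intro P; simp only [Matrix.mul_assoc], eU_left hMH]
      simp
    rw [h3, diagonal_apply_eq] at h
    exact_mod_cast h.symm
  rw [h2]
  calc _ ≤ Real.sqrt 1 * Real.sqrt (hMH.eigenvalues k) := by gcongr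
    _ = _ := by simp

end QCD

namespace QCD
open Matrix

variable {ι : Type} [Fintype ι] [DecidableEq ι]

lemma nsq_unitary (W : Matrix ι ι ℂ) (hW : Wᴴ * W = 1) (y : ι → ℂ) : nsq (W *ᵥ y) = nsq y := by
  have h := star_dot_self (W *ᵥ y)
  rw [star_mulVec, ← dotProduct_mulVec, mulVec_mulVec, hW, one_mulVec, star_dot_self] at h
  exact_mod_cast h.symm

lemma one_shot (U V : Matrix ι ι ℂ) (hU : Uᴴ * U = 1) (hV : Vᴴ * V = 1) (hV' : V * Vᴴ = 1)
    (p q : ι → ℝ) (hp : ∀ i, 0 ≤ p i) (hq : ∀ i, 0 ≤ q i) 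
    (hsupp : ∀ j i, q j = 0 → p i ≠ 0 → (Vᴴ * U) j i = 0) (μ ε : ℝ) (hμ : 0 < μ)
    (hε : 0 < ε ∧ ε < 1)
    (hsum : ∑ j, ∑ i, ‖(Vᴴ * U) j i‖ ^ 2 * p i = 1)
    (hτ : 1 - ε ^ 2 / 2 ≤ ∑ j, ∑ i, ‖(Vᴴ * U) j i‖ ^ 2 * p i * (q j / (q j + μ * p i))) :
    dMaxSmooth ε (U * diagonal (fun i => (p i : ℂ)) * Uᴴ) (V * diagonal (fun i => (q i : ℂ)) * Vᴴ) ≤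
      ((Real.logb 2 (1 / μ) + Real.logb 2 (1 / (1 - ε ^ 2)) : ℝ) : EReal) := by
  set W := Vᴴ * U with hWdef
  have hW : Wᴴ * W = 1 := by
    rw [hWdef, conjTranspose_mul, conjTranspose_conjTranspose, Matrix.mul_assoc,
      ← Matrix.mul_assoc V, hV', Matrix.one_mul, hU]
  set X : Matrix ι ι ℂ := Matrix.of fun j i => W j i * (((q j + μ * p i)⁻¹ : ℝ) : ℂ) with hX
  set S : Matrix ι ι ℂ := diagonal (fun i => ((Real.sqrt (q i) : ℝ) : ℂ)) with hS
  set Dp : Matrix ι ι ℂ := diagonal (fun i => ((Real.sqrt (p i) : ℝ) : ℂ)) with hDp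
  set Dq : Matrix ι ι ℂ := diagonal (fun i => (q i : ℂ)) with hDq
  set P : Matrix ι ι ℂ := diagonal (fun i => (p i : ℂ)) with hP
  have hSS : S * S = Dq := by
    rw [hS, diagonal_mul_diagonal]
    congr 1; ext i
    rw [← Complex.ofReal_mul, Real.mul_self_sqrt (hq i)]
  have hDD : Dp * Dp = P := by
    rw [hDp, diagonal_mul_diagonal]
    congr 1; ext i
    rw [← Complex.ofReal_mul, Real.mul_self_sqrt (hp i)]
  have hSH : Sᴴ = S := by
    rw [hS, diagonal_conjTranspose]; congr 1; ext i; simp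
  have hDpH : Dpᴴ = Dp := by
    rw [hDp, diagonal_conjTranspose]; congr 1; ext i; simp
  set m : ℂ := ((Real.sqrt μ : ℝ) : ℂ) with hm
  have hmm : m * m = (μ : ℂ) := by
    rw [hm, ← Complex.ofReal_mul, Real.mul_self_sqrt hμ.le]
  have hms : star m = m := by simp [hm]
  have key := amgm S (m • Dp) X (diagonal (fun j => if q j = 0 then (0:ℂ) else 1) * W) hSH
    (by rw [conjTranspose_smul, hDpH, hms])
    (by
      ext j i
      rw [hSS, smul_mul_smul_comm, hDD, hmm, Matrix.add_apply, hDq, diagonal_mul, Matrix.mul_smul,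
        Matrix.smul_apply, hP, mul_diagonal, diagonal_mul, hX, Matrix.of_apply, smul_eq_mul]
      by_cases hqj : q j = 0
      · by_cases hpi : p i = 0
        · simp [hqj, hpi]
        · simp [hqj, hsupp j i hqj hpi]
      · have h1 : q j + μ * p i ≠ 0 := by
          have := lt_of_le_of_ne (hq j) (Ne.symm hqj)
          have := mul_nonneg hμ.le (hp i)
          linarith
        have h2 : (q j : ℂ) + μ * p i ≠ 0 := by exact_mod_cast h1
        simp only [hqj, if_false]
        push_cast
        field_simp)
    (by
      intro x y
      rw [← mulVec_mulVec]
      have : star x ⬝ᵥ (diagonal (fun j => if q j = 0 then (0:ℂ) else 1) *ᵥ (W *ᵥ y)) =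
          star (fun j => if q j = 0 then (0:ℂ) else x j) ⬝ᵥ (W *ᵥ y) := by
        simp only [dotProduct, mulVec_diagonal, Pi.star_apply]
        refine Finset.sum_congr rfl fun j _ => ?_
        by_cases hj : q j = 0 <;> simp [hj]
      rw [this]
      refine (re_dot_le' _ _).trans ?_
      rw [nsq_unitary W hW]
      have : nsq (fun j => if q j = 0 then (0:ℂ) else x j) ≤ nsq x := by
        unfold nsq
        refine Finset.sum_le_sum fun j _ => ?_
        by_cases hj : q j = 0 <;> simp [hj]
      linarith)
  set L0 := V * (Dq * X * Dp) with hL0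
  have hPSD : (((1 / 4 : ℝ) : ℂ) • (V * Dq * Vᴴ) - (μ : ℂ) • (L0 * L0ᴴ)).PosSemidef := by
    have h := key.mul_mul_conjTranspose_same (V * S)
    convert h using 1
    rw [Matrix.mul_sub, Matrix.sub_mul]
    congr 1
    · rw [Matrix.mul_smul, Matrix.mul_one, Matrix.smul_mul, conjTranspose_mul, hSH, ← hSS]
      simp only [Matrix.mul_assoc]
      norm_num
    · rw [hL0, ← hSS, ← hmm]
      simp only [Matrix.mul_smul, Matrix.smul_mul, conjTranspose_smul, conjTranspose_mul, hSH, hDpH,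
        smul_smul, Matrix.mul_assoc, hms]
  set g : ι → ι → ℝ := fun j i => q j / (q j + μ * p i) with hg
  have hg0 : ∀ j i, 0 ≤ g j i := fun j i =>
    div_nonneg (hq j) (add_nonneg (hq j) (mul_nonneg hμ.le (hp i)))
  have hg1 : ∀ j i, g j i ≤ 1 := fun j i =>
    div_le_one_of_le₀ (by have := mul_nonneg hμ.le (hp i); linarith)
      (add_nonneg (hq j) (mul_nonneg hμ.le (hp i)))
  set g1 := ∑ j, ∑ i, ‖W j i‖ ^ 2 * p i * g j i with hg1def
  set N := ∑ j, ∑ i, ‖W j i‖ ^ 2 * p i * (g j i) ^ 2 with hN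
  have hw0 : ∀ j i, 0 ≤ ‖W j i‖ ^ 2 * p i := fun j i => mul_nonneg (by positivity) (hp i)
  have hNle : N ≤ g1 := by
    refine Finset.sum_le_sum fun j _ => Finset.sum_le_sum fun i _ => ?_
    refine mul_le_mul_of_nonneg_left ?_ (hw0 j i)
    nlinarith [hg0 j i, hg1 j i]
  have hNge : 2 * g1 - 1 ≤ N := by
    rw [← hsum, hN, hg1def, Finset.mul_sum, ← Finset.sum_sub_distrib]
    refine Finset.sum_le_sum fun j _ => ?_
    rw [Finset.mul_sum, ← Finset.sum_sub_distrib]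
    refine Finset.sum_le_sum fun i _ => ?_
    nlinarith [hw0 j i, mul_nonneg (hw0 j i) (sq_nonneg (g j i - 1))]
  have hε2 : 0 < 1 - ε ^ 2 := by nlinarith [hε.1, hε.2]
  have hNε : 1 - ε ^ 2 ≤ N := by linarith
  have hNpos : 0 < N := by linarith
  have hL0entry : ∀ j i, (Dq * X * Dp) j i = W j i * ((g j i * Real.sqrt (p i) : ℝ) : ℂ) := by
    intro j i
    rw [hDp, mul_diagonal, hDq, diagonal_mul, hX, Matrix.of_apply, hg]
    push_cast
    ring
  have hL0tr : (L0 * L0ᴴ).trace = (N : ℂ) := by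
    have : (L0 * L0ᴴ).trace = ((Dq * X * Dp) * (Dq * X * Dp)ᴴ).trace := by
      rw [hL0, conjTranspose_mul, Matrix.trace_mul_comm, Matrix.mul_assoc, ← Matrix.mul_assoc Vᴴ,
        hV, Matrix.one_mul, Matrix.trace_mul_comm]
    rw [this, Matrix.trace]
    simp only [diag_apply, mul_conjTranspose_diag]
    rw [← Complex.ofReal_sum]
    congr 1
    rw [hN]
    refine Finset.sum_congr rfl fun j _ => ?_
    rw [nsq]
    refine Finset.sum_congr rfl fun i _ => ?_
    rw [norm_star, hL0entry, norm_mul, Complex.norm_real, mul_pow, Real.norm_eq_abs, sq_abs, mul_pow,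
      Real.sq_sqrt (hp i)]
    ring
  set L := (((Real.sqrt N)⁻¹ : ℝ) : ℂ) • L0 with hL
  have hLL : L * Lᴴ = ((N⁻¹ : ℝ) : ℂ) • (L0 * L0ᴴ) := by
    rw [hL, conjTranspose_smul, smul_mul_smul_comm]
    congr 1
    simp only [RCLike.star_def, Complex.conj_ofReal]
    rw [← Complex.ofReal_mul, ← mul_inv, Real.mul_self_sqrt hNpos.le]
  have hfid := fid_lower (U * P * Uᴴ) (L * Lᴴ) (U * Dp) L (by
    rw [conjTranspose_mul, hDpH, ← hDD]; simp only [Matrix.mul_assoc]) rfl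
  have htr : rtr ((U * Dp)ᴴ * L) = (Real.sqrt N)⁻¹ * g1 := by
    have : ((U * Dp)ᴴ * L).trace = (((Real.sqrt N)⁻¹ * g1 : ℝ) : ℂ) := by
      rw [hL, Matrix.mul_smul, trace_smul, smul_eq_mul, Complex.ofReal_mul]
      congr 1
      have : (U * Dp)ᴴ * L0 = Dp * (Wᴴ * (Dq * X * Dp)) := by
        rw [hWdef, hL0]
        simp only [conjTranspose_mul, conjTranspose_conjTranspose, hDpH, Matrix.mul_assoc]
      rw [this, Matrix.trace_mul_comm, Matrix.mul_assoc, Matrix.trace_mul_comm, Matrix.trace]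
      rw [hg1def, Complex.ofReal_sum]
      refine Finset.sum_congr rfl fun j _ => ?_
      rw [diag_apply, Matrix.mul_apply, Complex.ofReal_sum]
      refine Finset.sum_congr rfl fun i _ => ?_
      rw [hDp, mul_diagonal, ← hDp, hL0entry, conjTranspose_apply]
      have h1 : star (W j i) * W j i = ((‖W j i‖ ^ 2 : ℝ) : ℂ) := by
        push_cast; exact Complex.conj_mul' _
      have h2 : (p i : ℂ) = (Real.sqrt (p i) : ℂ) * (Real.sqrt (p i) : ℂ) := by
        rw [← Complex.ofReal_mul, Real.mul_self_sqrt (hp i)]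
      have h3 : ((‖W j i‖ ^ 2 * p i * g j i : ℝ) : ℂ) =
          star (W j i) * W j i * ((Real.sqrt (p i) : ℂ) * (Real.sqrt (p i) : ℂ)) * (g j i : ℂ) := by
        rw [h1, ← h2]; push_cast; ring
      rw [h3]
      push_cast
      ring
    rw [rtr, this, Complex.ofReal_re]
  rw [htr] at hfid
  have hF : 1 - ε ^ 2 ≤ fidelity (U * P * Uᴴ) (L * Lᴴ) := by
    unfold fidelity
    have hsN : 0 < Real.sqrt N := Real.sqrt_pos.mpr hNpos
    have h0 : 0 ≤ (Real.sqrt N)⁻¹ * g1 := mul_nonneg (by positivity) (by linarith)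
    have h1 := pow_le_pow_left₀ h0 hfid 2
    refine le_trans ?_ h1
    rw [mul_pow, inv_pow, Real.sq_sqrt hNpos.le, inv_mul_eq_div, le_div_iff₀ hNpos]
    nlinarith
  refine iInf₂_le_of_le (L * Lᴴ) ⟨⟨posSemidef_self_mul_conjTranspose L, ?_⟩, ?_⟩ ?_
  · rw [hLL, trace_smul, hL0tr, smul_eq_mul, ← Complex.ofReal_mul, inv_mul_cancel₀ hNpos.ne']
    simp
  · unfold sineDist
    rw [Real.sqrt_le_left hε.1.le]
    linarith
  · refine sInf_le ⟨_, rfl, ?_⟩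
    unfold loewnerLE
    have hpow : (2:ℝ) ^ (Real.logb 2 (1 / μ) + Real.logb 2 (1 / (1 - ε ^ 2))) =
        1 / μ * (1 / (1 - ε ^ 2)) := by
      rw [Real.rpow_add (by norm_num), Real.rpow_logb (by norm_num) (by norm_num) (by positivity),
        Real.rpow_logb (by norm_num) (by norm_num) (by positivity)]
    rw [hpow, hLL]
    have hσ : (V * Dq * Vᴴ).PosSemidef := by
      refine PosSemidef.mul_mul_conjTranspose_same (PosSemidef.diagonal ?_) _
      intro i
      simp only [Pi.zero_apply]
      exact_mod_cast hq i
    have hc1 : (0:ℝ) ≤ 1 / (μ * N) := by positivity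
    have hc2 : (0:ℝ) ≤ 1 / μ * (1 / (1 - ε ^ 2)) - 1 / (μ * N) * (1 / 4) := by
      have : 1 / (μ * N) ≤ 1 / μ * (1 / (1 - ε ^ 2)) := by
        rw [← one_div_mul_one_div]
        gcongr
      linarith
    have h := (hPSD.smul (a := ((1 / (μ * N) : ℝ) : ℂ)) (by exact_mod_cast hc1)).add
      (hσ.smul (a := ((1 / μ * (1 / (1 - ε ^ 2)) - 1 / (μ * N) * (1 / 4) : ℝ) : ℂ))
        (by exact_mod_cast hc2))
    convert h using 1
    rw [smul_sub, smul_smul, smul_smul, ← Complex.ofReal_mul, ← Complex.ofReal_mul,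
      show 1 / (μ * N) * μ = N⁻¹ by field_simp, Complex.ofReal_sub, sub_smul]
    abel

end QCD

namespace QCD
open Matrix

variable {ι : Type} [Fintype ι] [DecidableEq ι]

/-- tensor power of a vector -/
def tpowVec (p : ι → ℝ) : ∀ k : ℕ, tpow ι k → ℝ
  | 0 => fun _ => 1
  | (k+1) => fun I => tpowVec p k I.1 * p I.2

lemma tpowMat_mul (A B : Matrix ι ι ℂ) : ∀ k, tpowMat (A * B) k = tpowMat A k * tpowMat B k
  | 0 => by simp [tpowMat]
  | (k+1) => by
    show tpowMat (A * B) k ⊗ₖ (A * B) = (tpowMat A k ⊗ₖ A) * (tpowMat B k ⊗ₖ B)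
    rw [tpowMat_mul A B k, mul_kronecker_mul]

lemma tpowMat_conjTranspose (A : Matrix ι ι ℂ) : ∀ k, tpowMat Aᴴ k = (tpowMat A k)ᴴ
  | 0 => by simp [tpowMat]
  | (k+1) => by
    show tpowMat Aᴴ k ⊗ₖ Aᴴ = (tpowMat A k ⊗ₖ A)ᴴ
    rw [tpowMat_conjTranspose A k, conjTranspose_kronecker]

lemma tpowMat_one : ∀ k, tpowMat (1 : Matrix ι ι ℂ) k = 1
  | 0 => by simp [tpowMat]
  | (k+1) => by
    show tpowMat (1 : Matrix ι ι ℂ) k ⊗ₖ (1 : Matrix ι ι ℂ) = 1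
    rw [tpowMat_one k]
    exact one_kronecker_one

lemma tpowMat_diagonal (p : ι → ℝ) : ∀ k, tpowMat (diagonal (fun i => (p i : ℂ))) k =
    diagonal (fun I => (tpowVec p k I : ℂ))
  | 0 => by
    show (1 : Matrix (tpow ι 0) (tpow ι 0) ℂ) = _
    simp [tpowVec]
  | (k+1) => by
    show tpowMat (diagonal (fun i => (p i : ℂ))) k ⊗ₖ diagonal (fun i => (p i : ℂ)) = _
    rw [tpowMat_diagonal p k]
    refine (diagonal_kronecker_diagonal _ _).trans ?_
    show diagonal _ = (diagonal _ : Matrix (tpow ι k × ι) (tpow ι k × ι) ℂ)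
    congr 1
    ext I
    simp [tpowVec]

lemma tpowVec_nonneg (p : ι → ℝ) (hp : ∀ i, 0 ≤ p i) : ∀ k I, 0 ≤ tpowVec p k I
  | 0, _ => by simp [tpowVec]
  | (k+1), I => mul_nonneg (tpowVec_nonneg p hp k I.1) (hp I.2)

lemma tpow_supp (W : Matrix ι ι ℂ) (p q : ι → ℝ) 
    (h : ∀ j i, q j = 0 → p i ≠ 0 → W j i = 0) :
    ∀ k J I, tpowVec q k J = 0 → tpowVec p k I ≠ 0 → tpowMat W k J I = 0
  | 0, _, _ => by simp [tpowVec]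
  | (k+1), J, I => by
    intro h1 h2
    show tpowMat W k J.1 I.1 * W J.2 I.2 = 0
    have h1' : tpowVec q k J.1 * q J.2 = 0 := h1
    have h2' : tpowVec p k I.1 * p I.2 ≠ 0 := h2
    rcases mul_eq_zero.mp h1' with h3 | h3
    · rw [tpow_supp W p q h k J.1 I.1 h3 (left_ne_zero_of_mul h2'), zero_mul]
    · rw [h _ _ h3 (right_ne_zero_of_mul h2'), mul_zero]

lemma tpow_sum (W : Matrix ι ι ℂ) (p q : ι → ℝ) (hp : ∀ i, 0 ≤ p i) (hq : ∀ i, 0 ≤ q i)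
    (f g : ℝ → ℝ) (hf1 : f 1 = 1) (hg1 : g 1 = 1)
    (hf : ∀ x y, 0 ≤ x → 0 ≤ y → f (x * y) = f x * f y)
    (hg : ∀ x y, 0 ≤ x → 0 ≤ y → g (x * y) = g x * g y) :
    ∀ k, ∑ J, ∑ I, ‖tpowMat W k J I‖ ^ 2 * f (tpowVec p k I) * g (tpowVec q k J) =
      (∑ j, ∑ i, ‖W j i‖ ^ 2 * f (p i) * g (q j)) ^ k
  | 0 => by
    have : ∀ F : tpow ι 0 → ℝ, ∑ x, F x = F PUnit.unit := fun F => by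
      exact Fintype.sum_unique (ι := PUnit) F
    rw [this, this]
    have h1 : tpowMat W 0 PUnit.unit PUnit.unit = 1 := by
      exact Matrix.one_apply_eq (α := ℂ) (PUnit.unit : tpow ι 0)
    rw [h1]
    simp [tpowVec, hf1, hg1]
  | (k+1) => by
    rw [pow_succ, ← tpow_sum W p q hp hq f g hf1 hg1 hf hg k]
    have : ∀ F : tpow ι (k+1) → ℝ, ∑ x, F x = ∑ x : tpow ι k, ∑ y : ι, F (x, y) := fun F => by
      exact Fintype.sum_prod_type (f := F)
    rw [this, Finset.sum_mul_sum]
    refine Finset.sum_congr rfl fun J _ => Finset.sum_congr rfl fun j _ => ?_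
    rw [this, Finset.sum_mul_sum]
    refine Finset.sum_congr rfl fun I _ => Finset.sum_congr rfl fun i _ => ?_
    have e1 : tpowMat W (k+1) (J, j) (I, i) = tpowMat W k J I * W j i := rfl
    have e2 : tpowVec p (k+1) (I, i) = tpowVec p k I * p i := rfl
    have e3 : tpowVec q (k+1) (J, j) = tpowVec q k J * q j := rfl
    rw [e1, e2, e3, hf _ _ (tpowVec_nonneg p hp k I) (hp i), hg _ _ (tpowVec_nonneg q hq k J) (hq j),
      norm_mul]
    ring

end QCD

namespace QCD

lemma exp_quad (u z : ℝ) (hu0 : 0 ≤ u) (hu : u ≤ 1) :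
    Real.exp (u * z) ≤ 1 + u * z + u ^ 2 * Real.exp |z| := by
  have h1 : HasSum (fun k : ℕ => (u * z) ^ k / (k.factorial : ℝ)) (Real.exp (u * z)) := by
    rw [Real.exp_eq_exp_ℝ]; exact NormedSpace.expSeries_div_hasSum_exp (u * z)
  have h2 : HasSum (fun k : ℕ => |z| ^ k / (k.factorial : ℝ)) (Real.exp |z|) := by
    rw [Real.exp_eq_exp_ℝ]; exact NormedSpace.expSeries_div_hasSum_exp |z|
  have h3 : HasSum (fun k : ℕ => if k = 0 then (1:ℝ) else 0) 1 := hasSum_ite_eq 0 1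
  have h4 : HasSum (fun k : ℕ => if k = 1 then u * z else 0) (u * z) := hasSum_ite_eq 1 _
  refine hasSum_le ?_ h1 ((h3.add h4).add (h2.mul_left (u ^ 2)))
  intro k
  match k with
  | 0 => simp; positivity
  | 1 => simp; positivity
  | (k+2) =>
    simp only [Nat.add_eq_zero_iff, OfNat.ofNat_ne_zero, and_false, if_false,
      show k + 2 ≠ 1 by omega, zero_add]
    rw [← mul_div_assoc]
    gcongr
    refine (le_abs_self _).trans ?_
    rw [abs_pow, abs_mul, abs_of_nonneg hu0, mul_pow]
    gcongr ?_ * _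
    exact pow_le_pow_of_le_one hu0 hu (by omega)

/-- moment bound -/
lemma moment_bound {κ : Type*} (s : Finset κ) (P x : κ → ℝ) (hP : ∀ k ∈ s, 0 ≤ P k)
    (hs : ∑ k ∈ s, P k = 1) (γ C u : ℝ) (hγ : 0 < γ)
    (hC : C = Real.log (∑ k ∈ s, P k * Real.exp (γ * x k) + ∑ k ∈ s, P k * Real.exp (-(γ * x k)) + 1) / γ)
    (hu0 : 0 ≤ u) (hu : u ≤ 1) :
    1 / γ ≤ C ∧ ∑ k ∈ s, P k * Real.exp (u / C * x k) ≤
      Real.exp (u / C * ∑ k ∈ s, P k * x k + Real.exp 1 * u ^ 2) := by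
  set A := ∑ k ∈ s, P k * Real.exp (γ * x k) with hA
  set B := ∑ k ∈ s, P k * Real.exp (-(γ * x k)) with hB
  have hAB : 2 ≤ A + B := by
    rw [hA, hB, ← Finset.sum_add_distrib]
    calc (2:ℝ) = ∑ k ∈ s, P k * 2 := by rw [← Finset.sum_mul, hs]; norm_num
      _ ≤ _ := by
        refine Finset.sum_le_sum fun k hk => ?_
        rw [← mul_add]
        refine mul_le_mul_of_nonneg_left ?_ (hP k hk)
        have := Real.add_one_le_exp (γ * x k)
        have := Real.add_one_le_exp (-(γ * x k))
        linarith
  have hK1 : 1 ≤ Real.log (A + B + 1) := by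
    rw [Real.le_log_iff_exp_le (by linarith)]
    have := Real.exp_one_lt_d9
    linarith
  set K := Real.log (A + B + 1) with hK
  have hC1 : 1 / γ ≤ C := by rw [hC]; gcongr
  have hC0 : 0 < C := lt_of_lt_of_le (by positivity) hC1
  refine ⟨hC1, ?_⟩
  have hKC : K = γ * C := by rw [hC]; field_simp
  have hz : ∑ k ∈ s, P k * Real.exp |x k / C| ≤ Real.exp 1 := by
    have h := Real.arith_mean_le_rpow_mean s P (fun k => Real.exp |x k / C|) hP hs
      (fun k _ => (Real.exp_pos _).le) hK1
    refine h.trans ?_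
    have h2 : ∑ k ∈ s, P k * Real.exp |x k / C| ^ K ≤ A + B + 1 := by
      have : ∑ k ∈ s, P k * Real.exp |x k / C| ^ K ≤ A + B := by
        rw [hA, hB, ← Finset.sum_add_distrib]
        refine Finset.sum_le_sum fun k hk => ?_
        rw [← mul_add]
        refine mul_le_mul_of_nonneg_left ?_ (hP k hk)
        rw [← Real.exp_mul]
        have e : |x k / C| * K = |γ * x k| := by
          rw [hKC, abs_div, abs_mul, abs_of_pos hC0, abs_of_pos hγ]; field_simp
        rw [e]
        exact Real.exp_abs_le _
      linarith
    calc _ ≤ (A + B + 1) ^ (1 / K) := by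
          refine Real.rpow_le_rpow ?_ h2 (by positivity)
          exact Finset.sum_nonneg fun k hk => mul_nonneg (hP k hk) (by positivity)
      _ = Real.exp 1 := by
          rw [Real.rpow_def_of_pos (by linarith), ← hK]
          congr 1; field_simp
  calc ∑ k ∈ s, P k * Real.exp (u / C * x k)
      ≤ ∑ k ∈ s, P k * (1 + u * (x k / C) + u ^ 2 * Real.exp |x k / C|) := by
        refine Finset.sum_le_sum fun k hk => mul_le_mul_of_nonneg_left ?_ (hP k hk)
        have := exp_quad u (x k / C) hu0 hu
        rwa [show u / C * x k = u * (x k / C) by ring]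
    _ = 1 + u / C * ∑ k ∈ s, P k * x k + u ^ 2 * ∑ k ∈ s, P k * Real.exp |x k / C| := by
        rw [Finset.mul_sum, Finset.mul_sum]
        nth_rewrite 2 [← hs]
        rw [← Finset.sum_add_distrib, ← Finset.sum_add_distrib]
        refine Finset.sum_congr rfl fun k _ => ?_
        ring
    _ ≤ (u / C * ∑ k ∈ s, P k * x k + Real.exp 1 * u ^ 2) + 1 := by
        have := mul_le_mul_of_nonneg_left hz (sq_nonneg u)
        linarith
    _ ≤ _ := Real.add_one_le_exp _

end QCD

namespace QCD
open Matrix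

variable {ι : Type} [Fintype ι] [DecidableEq ι]

/-- power function vanishing at zero -/
def pw (t : ℝ) : ℝ → ℝ := fun x => if x = 0 then 0 else x ^ t

lemma pw_one (t : ℝ) : pw t 1 = 1 := by simp [pw]

lemma pw_mul (t x y : ℝ) (hx : 0 ≤ x) (hy : 0 ≤ y) : pw t (x * y) = pw t x * pw t y := by
  unfold pw
  by_cases h1 : x = 0
  · simp [h1]
  by_cases h2 : y = 0
  · simp [h2]
  simp [h1, h2, Real.mul_rpow hx hy]

lemma pw_term (w p q t : ℝ) (hp : 0 ≤ p) (hq : 0 ≤ q) (h : q = 0 → p ≠ 0 → w = 0) :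
    w * pw (1 + t) p * pw (-t) q = w * p * Real.exp (t * (Real.log p - Real.log q)) := by
  by_cases h1 : p = 0
  · simp [h1, pw]
  by_cases h2 : q = 0
  · simp [h h2 h1]
  have hp' := lt_of_le_of_ne hp (Ne.symm h1)
  have hq' := lt_of_le_of_ne hq (Ne.symm h2)
  simp only [pw, h1, h2, if_false]
  rw [Real.rpow_add hp', Real.rpow_one, mul_sub, sub_eq_add_neg, Real.exp_add,
    Real.rpow_def_of_pos hp', Real.rpow_def_of_pos hq']
  rw [show Real.log p * t = t * Real.log p by ring,
    show Real.log q * (-t) = -(t * Real.log q) by ring]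
  ring

lemma tail_term (w p q δ μ : ℝ) (hw : 0 ≤ w) (hp : 0 ≤ p) (hq : 0 ≤ q) (hμ : 0 < μ)
    (hδ0 : 0 ≤ δ) (hδ : δ ≤ 1) (h : q = 0 → p ≠ 0 → w = 0) :
    w * p - w * p * (q / (q + μ * p)) ≤ μ ^ δ * (w * pw (1 + δ) p * pw (-δ) q) := by
  rw [pw_term w p q δ hp hq h]
  by_cases h1 : p = 0
  · simp [h1]
  by_cases h2 : q = 0
  · simp [h h2 h1]
  have hp' := lt_of_le_of_ne hp (Ne.symm h1)
  have hq' := lt_of_le_of_ne hq (Ne.symm h2)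
  have hr : 0 < μ * p / q := by positivity
  have e1 : 1 - q / (q + μ * p) = (μ * p / q) / (1 + μ * p / q) := by
    field_simp; ring
  have e2 : μ ^ δ * Real.exp (δ * (Real.log p - Real.log q)) = (μ * p / q) ^ δ := by
    rw [Real.rpow_def_of_pos hμ, Real.rpow_def_of_pos hr, ← Real.exp_add,
      Real.log_div (by positivity) hq'.ne', Real.log_mul hμ.ne' hp'.ne']
    congr 1; ring
  have e3 : ∀ r : ℝ, 0 < r → r / (1 + r) ≤ r ^ δ := by
    intro r hr
    rw [div_le_iff₀ (by positivity)]
    rcases le_total r 1 with h | h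
    · have : r ≤ r ^ δ := by
        simpa using Real.rpow_le_rpow_of_exponent_ge hr h hδ
      nlinarith
    · have : 1 ≤ r ^ δ := Real.one_le_rpow h hδ0
      nlinarith
  calc w * p - w * p * (q / (q + μ * p)) = w * p * (1 - q / (q + μ * p)) := by ring
    _ ≤ w * p * (μ * p / q) ^ δ := by
      rw [e1]; exact mul_le_mul_of_nonneg_left (e3 _ hr) (by positivity)
    _ = _ := by rw [← e2]; ring

lemma rtr_matFun_mul {A B : Matrix ι ι ℂ} (hA : A.IsHermitian) (hB : B.IsHermitian) (f g : ℝ → ℝ) :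
    rtr (matFun f A * matFun g B) = ∑ j, ∑ i,
      ‖((hB.eigenvectorUnitary : Matrix ι ι ℂ)ᴴ * (hA.eigenvectorUnitary : Matrix ι ι ℂ)) j i‖ ^ 2 *
        f (hA.eigenvalues i) * g (hB.eigenvalues j) := by
  rw [matFun_eq hA, matFun_eq hB]
  set U := (hA.eigenvectorUnitary : Matrix ι ι ℂ)
  set V := (hB.eigenvectorUnitary : Matrix ι ι ℂ)
  set F : Matrix ι ι ℂ := diagonal (fun i => (f (hA.eigenvalues i) : ℂ)) with hF
  set G : Matrix ι ι ℂ := diagonal (fun i => (g (hB.eigenvalues i) : ℂ)) with hG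
  have : (U * F * Uᴴ * (V * G * Vᴴ)).trace = ((Vᴴ * U * F) * ((Vᴴ * U)ᴴ * G)).trace := by
    rw [conjTranspose_mul, conjTranspose_conjTranspose]
    rw [show U * F * Uᴴ * (V * G * Vᴴ) = (U * F * Uᴴ * V * G) * Vᴴ by simp only [Matrix.mul_assoc],
      Matrix.trace_mul_comm]
    simp only [Matrix.mul_assoc]
  rw [rtr, this, Matrix.trace, Complex.re_sum]
  refine Finset.sum_congr rfl fun j _ => ?_
  rw [diag_apply, Matrix.mul_apply, Complex.re_sum]
  refine Finset.sum_congr rfl fun i _ => ?_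
  rw [hF, mul_diagonal, hG, mul_diagonal, conjTranspose_apply]
  set w := (Vᴴ * U) j i
  have h1 : w * star w = ((‖w‖ ^ 2 : ℝ) : ℂ) := by
    push_cast; exact Complex.mul_conj' _
  rw [show w * (f (hA.eigenvalues i) : ℂ) * (star w * (g (hB.eigenvalues j) : ℂ)) =
    (w * star w) * f (hA.eigenvalues i) * g (hB.eigenvalues j) by ring, h1]
  rw [← Complex.ofReal_mul, ← Complex.ofReal_mul, Complex.ofReal_re]

lemma supp_entry {A B : Matrix ι ι ℂ} (hA : A.IsHermitian) (hB : B.IsHermitian) (h : SuppLE A B)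
    (j i : ι) (hj : hB.eigenvalues j = 0) (hi : hA.eigenvalues i ≠ 0) :
    ((hB.eigenvectorUnitary : Matrix ι ι ℂ)ᴴ * (hA.eigenvectorUnitary : Matrix ι ι ℂ)) j i = 0 := by
  have eA := matFun_eq hA (fun x => x)
  have eB := matFun_eq hB (fun x => x)
  rw [matFun_id hA] at eA
  rw [matFun_id hB] at eB
  have lA := eU_left hA
  have lB := eU_left hB
  set U := (hA.eigenvectorUnitary : Matrix ι ι ℂ)
  set V := (hB.eigenvectorUnitary : Matrix ι ι ℂ)
  have h1 : B * V = V * diagonal (fun i => (hB.eigenvalues i : ℂ)) := by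
    conv_lhs => rw [eB]
    rw [Matrix.mul_assoc, lB, Matrix.mul_one]
  have h2 : B *ᵥ (fun k => V k j) = 0 := by
    ext k
    have := congrFun (congrFun h1 k) j
    rw [mul_diagonal, hj, Matrix.mul_apply] at this
    simpa [mulVec, dotProduct] using this
  have h3 := h _ h2
  have h4 : Uᴴ * (A * V) = diagonal (fun i => (hA.eigenvalues i : ℂ)) * (Uᴴ * V) := by
    conv_lhs => rw [eA]
    rw [show ∀ D : Matrix ι ι ℂ, Uᴴ * (U * D * Uᴴ * V) = (Uᴴ * U) * D * (Uᴴ * V) by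
      intro D; simp only [Matrix.mul_assoc], lA, Matrix.one_mul]
  have h5 : (Uᴴ * (A * V)) i j = 0 := by
    rw [Matrix.mul_apply]
    refine Finset.sum_eq_zero fun k _ => ?_
    have : (A * V) k j = 0 := by
      rw [Matrix.mul_apply]
      simpa [mulVec, dotProduct] using congrFun h3 k
    rw [this, mul_zero]
  rw [h4, diagonal_mul] at h5
  have h6 : (Uᴴ * V) i j = 0 := (mul_eq_zero.mp h5).resolve_left (by exact_mod_cast hi)
  have h7 : Vᴴ * U = (Uᴴ * V)ᴴ := by simp
  rw [h7, conjTranspose_apply, h6, star_zero]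

/-- n-fold one-shot bound -/
lemma nfold (U V : Matrix ι ι ℂ) (hU : Uᴴ * U = 1) (hV : Vᴴ * V = 1) (hV' : V * Vᴴ = 1)
    (p q : ι → ℝ) (hp : ∀ i, 0 ≤ p i) (hq : ∀ i, 0 ≤ q i)
    (hsupp : ∀ j i, q j = 0 → p i ≠ 0 → (Vᴴ * U) j i = 0) (μ ε : ℝ) (hμ : 0 < μ)
    (hε : 0 < ε ∧ ε < 1)
    (hsum : ∑ j, ∑ i, ‖(Vᴴ * U) j i‖ ^ 2 * p i = 1) (δ : ℝ) (hδ0 : 0 ≤ δ) (hδ : δ ≤ 1) (n : ℕ)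
    (hτ : μ ^ δ * (∑ j, ∑ i, ‖(Vᴴ * U) j i‖ ^ 2 * pw (1 + δ) (p i) * pw (-δ) (q j)) ^ n
      ≤ ε ^ 2 / 2) :
    dMaxSmooth ε (tpowMat (U * diagonal (fun i => (p i : ℂ)) * Uᴴ) n)
      (tpowMat (V * diagonal (fun i => (q i : ℂ)) * Vᴴ) n) ≤
      ((Real.logb 2 (1 / μ) + Real.logb 2 (1 / (1 - ε ^ 2)) : ℝ) : EReal) := by
  simp only [tpowMat_mul, tpowMat_conjTranspose, tpowMat_diagonal]
  have hWn : (tpowMat V n)ᴴ * tpowMat U n = tpowMat (Vᴴ * U) n := by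
    rw [tpowMat_mul, tpowMat_conjTranspose]
  have hpn := tpowVec_nonneg p hp n
  have hqn := tpowVec_nonneg q hq n
  have hsn := tpow_supp (Vᴴ * U) p q hsupp n
  have hsumn : ∑ J, ∑ I, ‖tpowMat (Vᴴ * U) n J I‖ ^ 2 * tpowVec p n I = 1 := by
    have := tpow_sum (Vᴴ * U) p q hp hq (fun x => x) (fun _ => 1) rfl rfl (by simp) (by simp) n
    simp only [mul_one] at this
    rw [this, hsum, one_pow]
  refine one_shot _ _ ?_ ?_ ?_ _ _ hpn hqn ?_ μ ε hμ hε ?_ ?_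
  · rw [← tpowMat_conjTranspose, ← tpowMat_mul, hU, tpowMat_one]
  · rw [← tpowMat_conjTranspose, ← tpowMat_mul, hV, tpowMat_one]
  · rw [← tpowMat_conjTranspose, ← tpowMat_mul, hV', tpowMat_one]
  · rw [hWn]; exact hsn
  · rw [hWn]; exact hsumn
  · rw [hWn]
    rw [← tpow_sum (Vᴴ * U) p q hp hq (pw (1 + δ)) (pw (-δ)) (pw_one _) (pw_one _)
      (pw_mul _) (pw_mul _) n] at hτ
    have key : ∑ J, ∑ I, ‖tpowMat (Vᴴ * U) n J I‖ ^ 2 * tpowVec p n I -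
        ∑ J, ∑ I, ‖tpowMat (Vᴴ * U) n J I‖ ^ 2 * tpowVec p n I *
          (tpowVec q n J / (tpowVec q n J + μ * tpowVec p n I)) ≤ ε ^ 2 / 2 := by
      refine le_trans ?_ hτ
      rw [Finset.mul_sum, ← Finset.sum_sub_distrib]
      refine Finset.sum_le_sum fun J _ => ?_
      rw [Finset.mul_sum, ← Finset.sum_sub_distrib]
      refine Finset.sum_le_sum fun I _ => ?_
      refine tail_term _ _ _ δ μ (by positivity) (hpn I) (hqn J) hμ hδ0 hδ ?_
      intro h1 h2
      rw [hsn J I h1 h2]; simp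
    rw [hsumn] at key
    linarith

lemma final_real (n : ℕ) (hn : 1 ≤ n) (ε C m T : ℝ) (hε : 0 < ε) (hC : 0 < C) :
    (n : ℝ)⁻¹ * ((n * m + n * (Real.exp 1 * (Real.log 2 / (2 * Real.sqrt n)) ^ 2) /
        (Real.log 2 / (2 * Real.sqrt n) / C) +
        Real.log (2 / ε ^ 2) / (Real.log 2 / (2 * Real.sqrt n) / C)) / Real.log 2 + T) ≤
      m / Real.log 2 + (4 * Real.logb 2 (2 / ε) / Real.sqrt n) * (C / Real.log 2) + (n : ℝ)⁻¹ * T := by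
  have hn0 : (0:ℝ) < n := by exact_mod_cast hn
  have hs : 0 < Real.sqrt n := Real.sqrt_pos.mpr hn0
  have hss : (n:ℝ) = Real.sqrt n ^ 2 := (Real.sq_sqrt hn0.le).symm
  have hl : 0 < Real.log 2 := Real.log_pos (by norm_num)
  have hlog : Real.log (2 / ε ^ 2) = 2 * Real.log (2 / ε) - Real.log 2 := by
    rw [Real.log_div (by norm_num) (by positivity), Real.log_div (by norm_num) hε.ne', Real.log_pow]
    push_cast; ring
  have hel : Real.exp 1 * Real.log 2 ≤ 4 := by
    have := Real.exp_one_lt_d9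
    have := Real.log_two_lt_d9
    nlinarith [Real.exp_pos 1]
  rw [hlog, Real.logb]
  rw [hss] 
  rw [Real.sqrt_sq hs.le]
  set s := Real.sqrt n
  set l := Real.log 2
  set Λ := Real.log (2 / ε)
  have e : m / l + 4 * (Λ / l) / s * (C / l) + (s ^ 2)⁻¹ * T -
    (s ^ 2)⁻¹ * ((s ^ 2 * m + s ^ 2 * (Real.exp 1 * (l / (2 * s)) ^ 2) / (l / (2 * s) / C) +
      (2 * Λ - l) / (l / (2 * s) / C)) / l + T) = C / (2 * s * l) * (4 - Real.exp 1 * l) := by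
    field_simp
    ring
  have : 0 ≤ C / (2 * s * l) * (4 - Real.exp 1 * l) := by
    apply mul_nonneg (by positivity); linarith
  linarith

lemma epow2_elog (a x : ℝ) (ha : a ≠ 0) (hx : 0 < x) :
    epow2 ((a : EReal) * (((a⁻¹ : ℝ) : EReal) * elog x)) = (x : EReal) := by
  rw [elog, if_neg (not_le.mpr hx), ← EReal.coe_mul, ← EReal.coe_mul, epow2,
    if_neg (EReal.coe_ne_top _), if_neg (EReal.coe_ne_bot _), EReal.toReal_coe,
    mul_inv_cancel_left₀ ha, Real.rpow_logb (by norm_num) (by norm_num) hx]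

lemma epow2_nonneg (x : EReal) : 0 ≤ epow2 x := by
  unfold epow2
  split_ifs
  · exact le_top
  · exact le_rfl
  · exact_mod_cast (by positivity)

lemma cGamma_top (γ : ℝ) (hγ : 0 < γ) (ρ σ : Matrix ι ι ℂ) (h : ¬ SuppLE ρ σ) :
    cGamma γ ρ σ = ⊤ := by
  unfold cGamma
  have h1 : petzRenyi (1 + γ) ρ σ = ⊤ := by
    rw [petzRenyi, if_pos ⟨by linarith, h⟩]
  rw [h1, EReal.coe_mul_top_of_pos hγ]
  have h2 : epow2 ⊤ = ⊤ := by simp [epow2]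
  rw [h2, EReal.top_add_of_ne_bot, EReal.top_add_of_ne_bot]
  · simp only [elogE, if_true]
    exact EReal.coe_mul_top_of_pos (inv_pos.mpr hγ)
  · exact ne_of_gt (lt_of_lt_of_le EReal.bot_lt_zero zero_le_one)
  · exact ne_of_gt (lt_of_lt_of_le EReal.bot_lt_zero (epow2_nonneg _))

lemma cGamma_real (γ : ℝ) (hγ : 0 < γ) (ρ σ : Matrix ι ι ℂ) (h : SuppLE ρ σ) (A B : ℝ)
    (hA : rtr (mpow ρ (1 + γ) * mpow σ (-γ)) = A) (hB : rtr (mpow ρ (1 + -γ) * mpow σ (- -γ)) = B)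
    (hA0 : 0 < A) (hB0 : 0 < B) :
    cGamma γ ρ σ = ((Real.log (A + B + 1) / γ / Real.log 2 : ℝ) : EReal) := by
  unfold cGamma petzRenyi
  rw [if_neg (by tauto), if_neg (by tauto)]
  rw [show 1 - (1 + γ) = -γ by ring, show 1 + γ - 1 = γ by ring,
    show (1 - γ) = 1 + -γ by ring, show 1 - (1 + -γ) = - -γ by ring,
    show 1 + -γ - 1 = -γ by ring, hA, hB, epow2_elog γ A hγ.ne' hA0,
    epow2_elog (-γ) B (by linarith) hB0]
  rw [← EReal.coe_one, ← EReal.coe_add, ← EReal.coe_add, elogE, if_neg (EReal.coe_ne_top _),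
    EReal.toReal_coe, elog, if_neg (by linarith), ← EReal.coe_mul, Real.logb]
  congr 1
  field_simp

lemma main_aux {ρ σ : Matrix ι ι ℂ}
    (hρ : IsState ρ) (hσ : IsState σ) (γ : ℝ) (hγ : 0 < γ ∧ γ ≤ 1)
    (ε : ℝ) (hε : 0 < ε ∧ ε < 1) (n : ℕ) (hn : 1 ≤ n) :
    (((n : ℝ)⁻¹ : ℝ) : EReal) * dMaxSmooth ε (tpowMat ρ n) (tpowMat σ n) ≤
      relEntropy ρ σ +
        ((4 * Real.logb 2 (2 / ε) / Real.sqrt n : ℝ) : EReal) * cGamma γ ρ σ +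
        (((n : ℝ)⁻¹ * Real.logb 2 (1 / (1 - ε ^ 2)) : ℝ) : EReal) := by
  have hn0 : (0:ℝ) < n := by exact_mod_cast hn
  have hs : 0 < Real.sqrt n := Real.sqrt_pos.mpr hn0
  have hl2 : 0 < Real.log 2 := Real.log_pos (by norm_num)
  by_cases hsup : SuppLE ρ σ
  swap
  · have hpos : 0 < 4 * Real.logb 2 (2 / ε) / Real.sqrt n := by
      have : 0 < Real.logb 2 (2 / ε) := Real.logb_pos (by norm_num) (by
        rw [lt_div_iff₀ hε.1]; linarith [hε.2])
      positivity
    rw [cGamma_top γ hγ.1 ρ σ hsup, relEntropy, if_neg hsup, EReal.coe_mul_top_of_pos hpos,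
      EReal.top_add_top, EReal.top_add_coe]
    exact le_top
  have hA := hρ.1.1
  have hB := hσ.1.1
  have eA := matFun_eq hA (fun x => x)
  have eB := matFun_eq hB (fun x => x)
  rw [matFun_id hA] at eA
  rw [matFun_id hB] at eB
  have hform := rtr_matFun_mul hA hB
  have hsupp := supp_entry hA hB hsup
  have hp := hρ.1.eigenvalues_nonneg
  have hq := hσ.1.eigenvalues_nonneg
  have hU := eU_left hA
  have hV := eU_left hB
  have hV' := eU_right hB
  set U := (hA.eigenvectorUnitary : Matrix ι ι ℂ) with hUdef
  set V := (hB.eigenvectorUnitary : Matrix ι ι ℂ) with hVdef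
  set p := hA.eigenvalues with hpdef
  set q := hB.eigenvalues with hqdef
  set W := Vᴴ * U with hW
  have hsum : ∑ j, ∑ i, ‖W j i‖ ^ 2 * p i = 1 := by
    have h := hform (fun x => x) (fun _ => 1)
    rw [matFun_id hA, matFun_one hB, Matrix.mul_one] at h
    simp only [mul_one] at h
    rw [← h, rtr, hρ.2]; simp
  set P : ι × ι → ℝ := fun k => ‖W k.1 k.2‖ ^ 2 * p k.2 with hP
  set x : ι × ι → ℝ := fun k => Real.log (p k.2) - Real.log (q k.1) with hx
  have hP0 : ∀ k ∈ Finset.univ, 0 ≤ P k := fun k _ => mul_nonneg (by positivity) (hp _)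
  have hPsum : ∑ k, P k = 1 := by rw [Fintype.sum_prod_type]; exact hsum
  have hpw : ∀ t, ∑ j, ∑ i, ‖W j i‖ ^ 2 * pw (1 + t) (p i) * pw (-t) (q j) =
      ∑ k, P k * Real.exp (t * x k) := by
    intro t
    rw [Fintype.sum_prod_type]
    refine Finset.sum_congr rfl fun j _ => Finset.sum_congr rfl fun i _ => ?_
    refine pw_term _ _ _ t (hp i) (hq j) fun h1 h2 => ?_
    rw [hsupp j i h1 h2]; simp
  have hpos : ∀ t, 0 < ∑ k, P k * Real.exp (t * x k) := by
    intro t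
    have h0 : ∃ k ∈ Finset.univ, 0 < P k := by
      by_contra hcon
      push Not at hcon
      have := Finset.sum_nonpos hcon
      linarith
    obtain ⟨k, hk, hk'⟩ := h0
    exact Finset.sum_pos' (fun k hk => mul_nonneg (hP0 k hk) (Real.exp_pos _).le)
      ⟨k, hk, mul_pos hk' (Real.exp_pos _)⟩
  set A := ∑ k, P k * Real.exp (γ * x k) with hAdef
  set B := ∑ k, P k * Real.exp (-(γ * x k)) with hBdef
  have hB2 : B = ∑ k, P k * Real.exp (-γ * x k) := by simp only [neg_mul, hBdef]
  set C := Real.log (A + B + 1) / γ with hC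
  set m := ∑ k, P k * x k with hm
  have hcG : cGamma γ ρ σ = ((C / Real.log 2 : ℝ) : EReal) := by
    refine cGamma_real γ hγ.1 ρ σ hsup A B ?_ ?_ (hpos γ) (hB2 ▸ hpos (-γ))
    · exact (hform _ _).trans (hpw γ)
    · rw [hB2]; exact (hform _ _).trans (hpw (-γ))
  have hrel : relEntropy ρ σ = ((m / Real.log 2 : ℝ) : EReal) := by
    rw [relEntropy, if_pos hsup]
    congr 1
    rw [Matrix.mul_sub]
    have h1 := hform (fun x => x * Real.logb 2 x) (fun _ => 1)
    have h2 := hform (fun x => x) (Real.logb 2)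
    rw [← matFun_mul hA, matFun_id hA, matFun_one hB, Matrix.mul_one] at h1
    rw [matFun_id hA] at h2
    have h3 : rtr (ρ * mlog ρ - ρ * mlog σ) = rtr (ρ * mlog ρ) - rtr (ρ * mlog σ) := by
      simp [rtr, Matrix.trace_sub]
    rw [h3, mlog, mlog, h1, h2, hm, Fintype.sum_prod_type, ← Finset.sum_sub_distrib, Finset.sum_div]
    refine Finset.sum_congr rfl fun j _ => ?_
    rw [← Finset.sum_sub_distrib, Finset.sum_div]
    refine Finset.sum_congr rfl fun i _ => ?_
    simp only [hP, hx, Real.logb]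
    ring
  set u := Real.log 2 / (2 * Real.sqrt n) with hu
  have hu0 : 0 < u := by positivity
  have hu1 : u ≤ 1 := by
    rw [hu, div_le_one (by positivity)]
    have h1 : 1 ≤ Real.sqrt n := Real.one_le_sqrt.mpr (by exact_mod_cast hn)
    have := Real.log_two_lt_d9
    linarith
  obtain ⟨hC1, hmom⟩ := moment_bound Finset.univ P x hP0 hPsum γ C u hγ.1 hC hu0.le hu1
  have hC1' : 1 ≤ C := le_trans (by rw [le_div_iff₀ hγ.1]; linarith [hγ.2]) hC1
  have hC0 : 0 < C := by linarith
  set δ := u / C with hδ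
  have hδ0 : 0 < δ := by positivity
  have hδ1 : δ ≤ 1 := by rw [hδ, div_le_one hC0]; linarith
  set Y := n * m + n * (Real.exp 1 * u ^ 2) / δ + Real.log (2 / ε ^ 2) / δ with hY
  have hτ : Real.exp (-Y) ^ δ * (∑ j, ∑ i, ‖W j i‖ ^ 2 * pw (1 + δ) (p i) * pw (-δ) (q j)) ^ n
      ≤ ε ^ 2 / 2 := by
    rw [hpw δ]
    calc _ ≤ Real.exp (-Y) ^ δ * (Real.exp (δ * m + Real.exp 1 * u ^ 2)) ^ n := by
          gcongr
          exact (hpos δ).le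
      _ = Real.exp (-Real.log (2 / ε ^ 2)) := by
          rw [← Real.exp_mul, ← Real.exp_nat_mul, ← Real.exp_add]
          congr 1
          rw [hY]
          field_simp
          ring
      _ = ε ^ 2 / 2 := by
          have := hε.1
          rw [Real.exp_neg, Real.exp_log (by positivity), inv_div]
  have hmain := nfold U V hU hV hV' p q hp hq hsupp (Real.exp (-Y)) ε (Real.exp_pos _) hε hsum δ
    hδ0.le hδ1 n hτ
  rw [← eA, ← eB] at hmain
  have hlogY : Real.logb 2 (1 / Real.exp (-Y)) = Y / Real.log 2 := by
    rw [Real.logb, one_div, ← Real.exp_neg, neg_neg, Real.log_exp]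
  rw [hlogY] at hmain
  have hfin := final_real n hn ε C m (Real.logb 2 (1 / (1 - ε ^ 2))) hε.1 hC0
  rw [hcG, hrel]
  refine (mul_le_mul_of_nonneg_left hmain (by exact_mod_cast (inv_pos.mpr hn0).le)).trans ?_
  rw [← EReal.coe_mul, ← EReal.coe_mul, ← EReal.coe_add, ← EReal.coe_add, EReal.coe_le_coe_iff]
  exact hfin

end QCD

namespace QCD

/-- Non-asymptotic AEP upper bound for the smoothed max-relative entropy. -/
theorem dMaxSmooth_AEP_upper {d : ℕ} (ρ σ : Matrix (Fin d) (Fin d) ℂ)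
    (hρ : IsState ρ) (hσ : IsState σ) (γ : ℝ) (hγ : 0 < γ ∧ γ ≤ 1)
    (ε : ℝ) (hε : 0 < ε ∧ ε < 1) (n : ℕ) (hn : 1 ≤ n) :
    (((n : ℝ)⁻¹ : ℝ) : EReal) * dMaxSmooth ε (tpowMat ρ n) (tpowMat σ n) ≤
      relEntropy ρ σ +
        ((4 * Real.logb 2 (2 / ε) / Real.sqrt n : ℝ) : EReal) * cGamma γ ρ σ +
        (((n : ℝ)⁻¹ * Real.logb 2 (1 / (1 - ε ^ 2)) : ℝ) : EReal) := by
  exact main_aux hρ hσ γ hγ ε hε n hn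

end QCD
end
end

section
/- Channel divergence bound for generalized depolarizing channels: Let 𝔇 assign to each pair of states on any finite-dimensional space an element of the extended reals such that 𝔇(Φ(ρ)‖Φ(σ)) ≤ 𝔇(ρ‖σ) for every quantum channel Φ and all states ρ, σ (data-processing inequality). For a state τ on ℂ^d and λ ∈ [0,1] let Λ^λ_τ : M_d(ℂ) → M_d(ℂ) be the generalized depolarizing channel Λ^λ_τ(ω) := (1−λ)·ω + λ·Tr(ω)·τ. Then for all states ρ, σ on ℂ^d, all λ ∈ [0,1] and all n ≥ 1, the channel divergence satisfies 𝔇((Λ^λ_ρ)^{⊗n} ‖ (Λ^λ_σ)^{⊗n}) ≤ 𝔇(ρ^{⊗n} ‖ σ^{⊗n}). -/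
open scoped Kronecker ComplexOrder

noncomputable section

namespace QCD

attribute [local instance] Classical.propDecidable

variable {n m : Type} [Fintype n] [DecidableEq n] [Fintype m] [DecidableEq m]

end QCD

namespace QCD

/-- The generalized depolarizing channel `ω ↦ (1-λ) ω + λ Tr(ω) τ`. -/
def genDepol {n : Type} [Fintype n] [DecidableEq n] (lam : ℝ) (τ : Matrix n n ℂ) :
    Matrix n n ℂ →ₗ[ℂ] Matrix n n ℂ :=
  (((1 - lam : ℝ) : ℂ)) • LinearMap.id +
    ((lam : ℝ) : ℂ) • ((Matrix.traceLinearMap n ℂ ℂ).smulRight τ)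

/-- Kernel tensor powers. -/
def tker {ι : Type} (T : ι → ι → ι → ι → ι → ι → ℂ) : ∀ n : ℕ,
    tpow ι n → tpow ι n → tpow ι n → tpow ι n → tpow ι n → tpow ι n → ℂ
  | 0 => fun _ _ _ _ _ _ => 1
  | (n+1) => fun c c' a a' b b' =>
      tker T n c.1 c'.1 a.1 a'.1 b.1 b'.1 * T c.2 c'.2 a.2 a'.2 b.2 b'.2

/-- Sums over the successor tensor power index. -/
lemma sum_tpow_succ {ι : Type} [Fintype ι] (n : ℕ) (f : tpow ι (n+1) → ℂ) :
    ∑ x : tpow ι (n+1), f x = ∑ x : tpow ι n, ∑ y : ι, f (x, y) :=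
  @Fintype.sum_prod_type ℂ (tpow ι n) ι _ _ _ f

lemma sum_tpow_zero {ι : Type} [Fintype ι] (f : tpow ι 0 → ℂ) :
    ∑ x : tpow ι 0, f x = f PUnit.unit :=
  Fintype.sum_unique (ι := PUnit) f

lemma tker_kraus {ι : Type} (T : ι → ι → ι → ι → ι → ι → ℂ)
    (h : ∃ (S : Type) (_ : Fintype S) (K : S → ι → ι → ι → ℂ), ∀ c c' a a' b b',
      T c c' a a' b b' = ∑ s, K s c a b * star (K s c' a' b')) (n : ℕ) :
    ∃ (S : Type) (_ : Fintype S) (K : S → tpow ι n → tpow ι n → tpow ι n → ℂ),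
      ∀ c c' a a' b b',
      tker T n c c' a a' b b' = ∑ s, K s c a b * star (K s c' a' b') := by
  induction n with
  | zero => exact ⟨Unit, inferInstance, fun _ _ _ _ => 1, by intros; simp [tker]⟩
  | succ n ih =>
    obtain ⟨S, _, K, hK⟩ := h
    obtain ⟨S', _, K', hK'⟩ := ih
    refine ⟨S' × S, inferInstance, fun s c a b => K' s.1 c.1 a.1 b.1 * K s.2 c.2 a.2 b.2, ?_⟩
    intro c c' a a' b b'
    simp only [tker, hK, hK', Fintype.sum_prod_type, Finset.sum_mul_sum, star_mul']
    refine Finset.sum_congr rfl fun _ _ => Finset.sum_congr rfl fun _ _ => ?_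
    ring

lemma tker_trace {ι : Type} [Fintype ι] [DecidableEq ι] (T : ι → ι → ι → ι → ι → ι → ℂ)
    (h : ∀ a a' b b', ∑ c, T c c a a' b b' = (if a = a' then 1 else 0) * (if b = b' then 1 else 0))
    (n : ℕ) : ∀ a a' b b' : tpow ι n, ∑ c, tker T n c c a a' b b' =
      (if a = a' then 1 else 0) * (if b = b' then 1 else 0) := by
  induction n with
  | zero =>
    intro a a' b b'
    rw [sum_tpow_zero]
    have h1 : a = a' := rfl
    have h2 : b = b' := rfl
    simp [tker, h1, h2]
  | succ n ih =>
    rintro ⟨a, x⟩ ⟨a', x'⟩ ⟨b, y⟩ ⟨b', y'⟩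
    rw [sum_tpow_succ]
    simp only [tker]
    rw [← Finset.sum_mul_sum, ih, h]
    have e : ∀ (a a' : tpow ι n) (x x' : ι),
        (if (show tpow ι (n+1) from (a, x)) = (show tpow ι (n+1) from (a', x')) then (1:ℂ) else 0)
        = (if a = a' then 1 else 0) * (if x = x' then 1 else 0) := by
      intro a a' x x'
      have : ((show tpow ι (n+1) from (a, x)) = (show tpow ι (n+1) from (a', x')))
        ↔ (a = a' ∧ x = x') := Prod.mk_inj
      rw [if_congr this rfl rfl]
      by_cases h1 : a = a' <;> by_cases h2 : x = x' <;> simp [h1, h2]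
    have e1 := e a a' x x'
    have e2 := e b b' y y'
    refine Eq.trans ?_ (congrArg₂ (· * ·) e1.symm e2.symm)
    ring

lemma tpowChannel_ker {ι : Type} [Fintype ι] [DecidableEq ι]
    (T : ι → ι → ι → ι → ι → ι → ℂ) (τ : Matrix ι ι ℂ) (E : Matrix ι ι ℂ →ₗ[ℂ] Matrix ι ι ℂ)
    (h : ∀ ω c c', E ω c c' = ∑ b, ∑ b', (∑ a, ∑ a', T c c' a a' b b' * τ a a') * ω b b')
    (n : ℕ) : ∀ ω c c', tpowChannel E n ω c c' =
      ∑ b, ∑ b', (∑ a, ∑ a', tker T n c c' a a' b b' * tpowMat τ n a a') * ω b b' := by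
  induction n with
  | zero =>
    intro ω c c'
    simp only [sum_tpow_zero]
    simp only [tker, tpowChannel, tpowMat]
    cases c; cases c'
    have : (1 : Matrix PUnit PUnit ℂ) PUnit.unit PUnit.unit = 1 := by simp
    exact (by rw [one_mul]; exact ((congrArg (· * _) this).trans (one_mul _)).symm)
  | succ n ih =>
    rintro ω ⟨c, x⟩ ⟨c', x'⟩
    have e : tpowChannel E (n+1) ω (c, x) (c', x') =
      tpowChannel E n (Matrix.of fun a b => E (Matrix.of fun y y' => ω (a, y) (b, y')) x x') c c' :=
      rfl
    rw [e, ih]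
    simp only [sum_tpow_succ, Matrix.of_apply, h]
    refine Finset.sum_congr rfl fun b _ => ?_
    rw [Finset.sum_comm]
    refine Finset.sum_congr rfl fun b' _ => ?_
    rw [Finset.mul_sum]
    refine Finset.sum_congr rfl fun y _ => ?_
    rw [Finset.mul_sum]
    refine Finset.sum_congr rfl fun y' _ => ?_
    rw [← mul_assoc]
    congr 1
    simp only [tker]
    have e2 : ∀ a a' z z', tpowMat τ (n+1) (a, z) (a', z') = tpowMat τ n a a' * τ z z' :=
      fun _ _ _ _ => rfl
    simp only [e2]
    rw [Finset.sum_mul_sum]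
    refine Finset.sum_congr rfl fun a _ => Finset.sum_congr rfl fun z _ => ?_
    rw [Finset.sum_mul_sum]
    refine Finset.sum_congr rfl fun a' _ => Finset.sum_congr rfl fun z' _ => ?_
    ring

/-- Kernel of the depolarizing map. -/
def dker {ι : Type} [DecidableEq ι] (lam : ℝ) (c c' a a' b b' : ι) : ℂ :=
  ((1 - lam : ℝ) : ℂ) * ((if a = a' then 1 else 0) * (if c = b then 1 else 0) *
    (if c' = b' then 1 else 0)) +
  (lam : ℂ) * ((if b = b' then 1 else 0) * (if c = a then 1 else 0) *
    (if c' = a' then 1 else 0))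

lemma dker_trace {ι : Type} [Fintype ι] [DecidableEq ι] (lam : ℝ) (a a' b b' : ι) :
    ∑ c, dker lam c c a a' b b' = (if a = a' then 1 else 0) * (if b = b' then 1 else 0) := by
  simp only [dker, Finset.sum_add_distrib, ← Finset.mul_sum, mul_assoc]
  simp only [ite_mul, one_mul, zero_mul, Finset.sum_ite_eq', Finset.mem_univ, if_true,
    Finset.sum_ite_eq]
  by_cases h1 : a = a' <;> by_cases h2 : b = b' <;> simp [h1, h2]

lemma dker_kraus {ι : Type} [Fintype ι] [DecidableEq ι] (lam : ℝ) (h0 : 0 ≤ lam) (h1 : lam ≤ 1) :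
    ∃ (S : Type) (_ : Fintype S) (K : S → ι → ι → ι → ℂ), ∀ c c' a a' b b',
      dker lam c c' a a' b b' = ∑ s, K s c a b * star (K s c' a' b') := by
  refine ⟨ι ⊕ ι, inferInstance, Sum.elim
    (fun e c a b => (Real.sqrt (1 - lam) : ℂ) *
      ((if a = e then 1 else 0) * (if c = b then 1 else 0)))
    (fun e c a b => (Real.sqrt lam : ℂ) *
      ((if b = e then 1 else 0) * (if c = a then 1 else 0))), ?_⟩
  intro c c' a a' b b'
  have s1 : ((Real.sqrt (1 - lam) : ℝ) : ℂ) * (Real.sqrt (1 - lam) : ℝ) = ((1 - lam : ℝ) : ℂ) := by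
    rw [← Complex.ofReal_mul, Real.mul_self_sqrt (by linarith)]
  have s2 : ((Real.sqrt lam : ℝ) : ℂ) * (Real.sqrt lam : ℝ) = (lam : ℂ) := by
    rw [← Complex.ofReal_mul, Real.mul_self_sqrt h0]
  have key : ∀ (r : ℝ) (a a' : ι) (p q : Prop) [Decidable p] [Decidable q],
      ∑ e, ((r : ℂ) * ((if a = e then 1 else 0) * (if p then 1 else 0))) *
        star ((r : ℂ) * ((if a' = e then 1 else 0) * (if q then 1 else 0)))
      = ((r : ℂ) * r) * ((if a = a' then 1 else 0) * (if p then 1 else 0) *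
        (if q then 1 else 0)) := by
    intro r a a' p q _ _
    rw [Finset.sum_eq_single a]
    · by_cases h1 : a = a'
      · by_cases h2 : p <;> by_cases h3 : q <;> simp [h1, h2, h3]
      · simp [h1, Ne.symm h1]
    · intro e _ he
      simp [Ne.symm he]
    · simp
  rw [Fintype.sum_sum_type]
  simp only [Sum.elim_inl, Sum.elim_inr]
  rw [key, key, s1, s2]
  rfl

lemma genDepol_ker {ι : Type} [Fintype ι] [DecidableEq ι] (lam : ℝ) (τ : Matrix ι ι ℂ)
    (hτ : τ.trace = 1) (ω : Matrix ι ι ℂ) (c c' : ι) :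
    genDepol lam τ ω c c' =
      ∑ b, ∑ b', (∑ a, ∑ a', dker lam c c' a a' b b' * τ a a') * ω b b' := by
  have h1 : ∀ b b', ∑ a, ∑ a', dker lam c c' a a' b b' * τ a a' =
      ((1 - lam : ℝ) : ℂ) * ((if c = b then 1 else 0) * (if c' = b' then 1 else 0)) +
      lam * ((if b = b' then 1 else 0) * τ c c') := by
    intro b b'
    have : ∑ a, τ a a = 1 := hτ
    simp only [dker, add_mul, Finset.sum_add_distrib]
    congr 1
    · refine Eq.trans ?_ ((congrArg (_ * ·) this).trans (mul_one _))
      simp only [Finset.mul_sum]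
      refine Finset.sum_congr rfl fun a _ => ?_
      rw [Finset.sum_eq_single a]
      · simp
      · intro e _ he
        simp [Ne.symm he]
      · simp
    · rw [Finset.sum_eq_single c]
      · rw [Finset.sum_eq_single c']
        · simp [mul_assoc]
        · intro e _ he
          simp [Ne.symm he]
        · simp
      · intro e _ he
        simp [Ne.symm he]
      · simp
  simp only [h1, add_mul, Finset.sum_add_distrib]
  simp only [genDepol, LinearMap.add_apply, LinearMap.smul_apply, Matrix.add_apply,
    Matrix.smul_apply, LinearMap.id_apply, LinearMap.smulRight_apply, Matrix.traceLinearMap_apply,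
    smul_eq_mul]
  congr 1
  · rw [Finset.sum_eq_single c]
    · rw [Finset.sum_eq_single c']
      · simp
      · intro e _ he
        simp [Ne.symm he]
      · simp
    · intro e _ he
      simp [Ne.symm he]
    · simp
  · simp only [Matrix.trace, Matrix.diag, Finset.sum_mul, Finset.mul_sum]
    refine Finset.sum_congr rfl fun b _ => ?_
    rw [Finset.sum_eq_single b]
    · simp; ring
    · intro e _ he
      simp [Ne.symm he]
    · simp

lemma isState_tpowMat {ι : Type} [Fintype ι] [DecidableEq ι] {τ : Matrix ι ι ℂ}
    (h : IsState τ) (n : ℕ) : IsState (tpowMat τ n) := by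
  induction n with
  | zero =>
    refine ⟨Matrix.PosSemidef.one, ?_⟩
    rw [Matrix.trace, sum_tpow_zero]
    exact Matrix.one_apply_eq (α := ℂ) (n := PUnit) PUnit.unit
  | succ n ih =>
    refine ⟨ih.1.kronecker h.1, ?_⟩
    exact (Matrix.trace_kronecker _ _).trans (by rw [ih.2, h.2, one_mul])

/-- A linear map in Kraus form. -/
def krausMap {p q S : Type} [Fintype p] [Fintype S] (L : S → Matrix q p ℂ) :
    Matrix p p ℂ →ₗ[ℂ] Matrix q q ℂ where
  toFun X := ∑ s, L s * X * (L s).conjTranspose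
  map_add' X Y := by simp [Matrix.mul_add, Matrix.add_mul, Finset.sum_add_distrib]
  map_smul' c X := by simp [Finset.smul_sum]

lemma krausMap_cp {p q S : Type} [Fintype p] [Fintype q] [Fintype S]
    (L : S → Matrix q p ℂ) (k : ℕ) (M : Matrix (Fin k × p) (Fin k × p) ℂ) (hM : M.PosSemidef) :
    (blockApply (krausMap L) M).PosSemidef := by
  have : blockApply (krausMap L) M = ∑ s, ((1 : Matrix (Fin k) (Fin k) ℂ) ⊗ₖ L s) * M *
      ((1 : Matrix (Fin k) (Fin k) ℂ) ⊗ₖ L s).conjTranspose := by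
    ext ⟨i, c⟩ ⟨j, c'⟩
    simp only [blockApply, krausMap, LinearMap.coe_mk, AddHom.coe_mk, Matrix.of_apply,
      Matrix.sum_apply]
    refine Finset.sum_congr rfl fun s _ => ?_
    simp [Matrix.mul_apply, Fintype.sum_prod_type, Matrix.one_apply, Finset.sum_mul,
      Matrix.conjTranspose_apply, ite_mul, apply_ite]
  rw [this]
  exact Matrix.posSemidef_sum _ fun s _ => hM.mul_mul_conjTranspose_same _

lemma sum_reorder {S R A : Type} [Fintype S] [Fintype R] [Fintype A]
    (f : S → R → A → A → A → A → ℂ) :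
    ∑ s, ∑ r, ∑ a', ∑ a, ∑ b, ∑ b', f s r a' a b b' =
      ∑ b, ∑ b', ∑ a, ∑ a', ∑ s, ∑ r, f s r a' a b b' := by
  let e : S × R × A × A × A × A ≃ A × A × A × A × S × R :=
    { toFun := fun ⟨s, r, a', a, b, b'⟩ => ⟨b, b', a, a', s, r⟩
      invFun := fun ⟨b, b', a, a', s, r⟩ => ⟨s, r, a', a, b, b'⟩
      left_inv := fun _ => rfl
      right_inv := fun _ => rfl }
  have h := Fintype.sum_equiv e (fun ⟨s, r, a', a, b, b'⟩ => f s r a' a b b')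
    (fun ⟨b, b', a, a', s, r⟩ => f s r a' a b b') (fun _ => rfl)
  simpa only [Fintype.sum_prod_type] using h

/-- Channel divergence bound for generalized depolarizing channels. -/
theorem depolarizing_channelDiv_le
    (𝔇 : ∀ (p : Type) [Fintype p] [DecidableEq p], Matrix p p ℂ → Matrix p p ℂ → EReal)
    (hDPI : ∀ (p q : Type) [Fintype p] [DecidableEq p] [Fintype q] [DecidableEq q]
      (Φ : Matrix p p ℂ →ₗ[ℂ] Matrix q q ℂ), IsQChannel Φ →
      ∀ ρ σ : Matrix p p ℂ, IsState ρ → IsState σ → 𝔇 q (Φ ρ) (Φ σ) ≤ 𝔇 p ρ σ)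
    {d : ℕ} (ρ σ : Matrix (Fin d) (Fin d) ℂ) (hρ : IsState ρ) (hσ : IsState σ)
    (lam : ℝ) (hlam : 0 ≤ lam ∧ lam ≤ 1) (n : ℕ) (hn : 1 ≤ n) :
    chDiv 𝔇 (tpowChannel (genDepol lam ρ) n) (tpowChannel (genDepol lam σ) n) ≤
      𝔇 _ (tpowMat ρ n) (tpowMat σ n) := by
  refine iSup_le fun k => iSup_le fun hk => iSup_le fun ν => iSup_le fun hν => ?_
  obtain ⟨S, _, K, hK⟩ := tker_kraus _ (dker_kraus (ι := Fin d) lam hlam.1 hlam.2) n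
  obtain ⟨R, hR⟩ : ∃ R : Matrix (Fin k × tpow (Fin d) n) (Fin k × tpow (Fin d) n) ℂ,
      ν = R.conjTranspose * R := by
    open scoped MatrixOrder in
    exact CStarAlgebra.nonneg_iff_eq_star_mul_self.mp hν.1.nonneg
  have hR' : ∀ x y, ν x y = ∑ r, star (R r x) * R r y := by
    intro x y
    rw [hR, Matrix.mul_apply]
    rfl
  let L : S × (Fin k × tpow (Fin d) n) → Matrix (Fin k × tpow (Fin d) n) (tpow (Fin d) n) ℂ :=
    fun s => Matrix.of fun x a => ∑ b, K s.1 x.2 a b * star (R s.2 (x.1, b))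
  have hL : ∀ (X : Matrix (tpow (Fin d) n) (tpow (Fin d) n) ℂ) i j c c',
      krausMap L X (i, c) (j, c') = ∑ b, ∑ b', (∑ a, ∑ a',
        tker (dker lam) n c c' a a' b b' * X a a') * ν (i, b) (j, b') := by
    intro X i j c c'
    have e1 : krausMap L X (i, c) (j, c') = ∑ s, ∑ r, ∑ a', ∑ a, ∑ b, ∑ b',
        (K s c a b * star (K s c' a' b')) * X a a' * (star (R r (i, b)) * R r (j, b')) := by
      simp only [krausMap, LinearMap.coe_mk, AddHom.coe_mk, Matrix.sum_apply,
        Fintype.sum_prod_type (α₁ := S), Matrix.mul_apply, Matrix.conjTranspose_apply, L,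
        Matrix.of_apply]
      refine Finset.sum_congr rfl fun s _ => Finset.sum_congr rfl fun r _ =>
        Finset.sum_congr rfl fun a' _ => ?_
      rw [Finset.sum_mul]
      refine Finset.sum_congr rfl fun a _ => ?_
      rw [star_sum, Finset.sum_mul, Finset.sum_mul_sum]
      refine Finset.sum_congr rfl fun b _ => Finset.sum_congr rfl fun b' _ => ?_
      rw [star_mul', star_star]
      ring
    rw [e1]
    rw [sum_reorder]
    refine Finset.sum_congr rfl fun b _ => Finset.sum_congr rfl fun b' _ => ?_
    rw [Finset.sum_mul]
    refine Finset.sum_congr rfl fun a _ => ?_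
    rw [Finset.sum_mul]
    refine Finset.sum_congr rfl fun a' _ => ?_
    rw [hK, hR', Finset.sum_mul, Finset.sum_mul_sum]
  have hap : ∀ τ : Matrix (Fin d) (Fin d) ℂ, IsState τ →
      blockApply (tpowChannel (genDepol lam τ) n) ν = krausMap L (tpowMat τ n) := by
    intro τ hτ
    ext ⟨i, c⟩ ⟨j, c'⟩
    rw [hL]
    exact tpowChannel_ker _ τ _ (genDepol_ker lam τ hτ.2) n _ c c'
  rw [hap ρ hρ, hap σ hσ]
  refine hDPI _ _ _ ⟨?_, fun k _ M hM => krausMap_cp L k M hM⟩ _ _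
    (isState_tpowMat hρ n) (isState_tpowMat hσ n)
  intro X
  have ht : ∑ i, ∑ b, ν (i, b) (i, b) = 1 := by
    rw [← Fintype.sum_prod_type']
    exact hν.2
  have e : (krausMap L X).trace = ∑ i, ∑ b, ∑ b', ∑ a, ∑ a',
      (∑ c, tker (dker lam) n c c a a' b b') * X a a' * ν (i, b) (i, b') := by
    simp only [Matrix.trace, Matrix.diag, Fintype.sum_prod_type, hL, Finset.sum_mul]
    refine Finset.sum_congr rfl fun i _ => ?_
    rw [Finset.sum_comm]
    refine Finset.sum_congr rfl fun b _ => ?_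
    rw [Finset.sum_comm]
    refine Finset.sum_congr rfl fun b' _ => ?_
    rw [Finset.sum_comm]
    refine Finset.sum_congr rfl fun a _ => ?_
    rw [Finset.sum_comm]
  rw [e]
  simp only [tker_trace _ (dker_trace lam) n]
  refine Eq.trans ?_ ((congrArg (· * _) ht).trans (one_mul _))
  rw [Finset.sum_mul]
  refine Finset.sum_congr rfl fun i _ => ?_
  rw [Finset.sum_mul]
  refine Finset.sum_congr rfl fun b _ => ?_
  rw [Finset.sum_eq_single b]
  · simp only [Matrix.trace, Matrix.diag, Finset.mul_sum]
    refine Finset.sum_congr rfl fun a _ => ?_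
    rw [Finset.sum_eq_single a]
    · simp; ring
    · intro e _ he
      simp [Ne.symm he]
    · simp
  · intro e _ he
    simp [Ne.symm he]
  · simp

end QCD
end
end

section
/- Anti-monotonicity of the geometric Rényi divergence in the second argument: Let ρ be a state on ℂ^d, let σ₁, σ₂ be positive semidefinite d×d complex matrices with σ₁ ≤ σ₂ in the Loewner order, and let α ∈ (1,2]. Then 𝐷̂_α(ρ‖σ₁) ≥ 𝐷̂_α(ρ‖σ₂) in the extended reals. -/
open scoped Kronecker ComplexOrder

noncomputable section

namespace QCD

attribute [local instance] Classical.propDecidable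

variable {n m : Type} [Fintype n] [DecidableEq n] [Fintype m] [DecidableEq m]

end QCD

namespace QCD

section Helpers

variable {k : Type} [Fintype k] [DecidableEq k]

lemma matFun_eq_cfc (f : ℝ → ℝ) (A : Matrix k k ℂ) (hA : A.IsHermitian) :
    matFun f A = cfc f A := by
  rw [hA.cfc_eq, matFun, dif_pos hA, Matrix.IsHermitian.cfc, Unitary.conjStarAlgAut_apply]
  rfl

lemma spec_cont (f : ℝ → ℝ) (A : Matrix k k ℂ) : ContinuousOn f (spectrum ℝ A) := by
  rw [continuousOn_iff_continuous_domRestrict]; fun_prop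

lemma cfc_intertwine (f : ℝ → ℝ) (X Y A : Matrix k k ℂ) (hX : IsSelfAdjoint X)
    (hY : IsSelfAdjoint Y) (h : X * A = A * Y) : cfc f X * A = A * cfc f Y := by
  have hfX : (spectrum ℝ X).Finite := Set.toFinite _
  have hfY : (spectrum ℝ Y).Finite := Set.toFinite _
  have hf := hfX.union hfY
  let s : Finset ℝ := hf.toFinset
  let p := Lagrange.interpolate s id f
  have hp : ∀ x ∈ s, p.eval x = f x := fun x hx =>
    Lagrange.eval_interpolate_at_node (v := id) f (Function.injective_id.injOn) hx
  have e1 : cfc f X = Polynomial.aeval X p := by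
    rw [← cfc_polynomial p X hX]
    exact cfc_congr fun x hx => (hp x (by simp [s, hx])).symm
  have e2 : cfc f Y = Polynomial.aeval Y p := by
    rw [← cfc_polynomial p Y hY]
    exact cfc_congr fun x hx => (hp x (by simp [s, hx])).symm
  rw [e1, e2]
  induction p using Polynomial.induction_on' with
  | add p q hp hq => simp only [map_add, add_mul, mul_add, hp, hq]
  | monomial n a =>
    have hn : X ^ n * A = A * Y ^ n := by
      induction n with
      | zero => simp
      | succ n ih => rw [pow_succ, mul_assoc, h, ← mul_assoc, ih, mul_assoc, ← pow_succ]
    simp only [Polynomial.aeval_monomial]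
    rw [mul_assoc, hn, ← mul_assoc, Algebra.commutes a A, mul_assoc]

open scoped MatrixOrder Matrix.Norms.L2Operator in
lemma rpow_mono {Y₁ Y₂ R : Matrix k k ℂ} (hR : R.IsHermitian) (h1 : Y₁.PosSemidef)
    (h2 : Y₂.PosSemidef) (h : (Y₁ - Y₂).PosSemidef) {β : ℝ} (hβ : 0 < β) (hβ' : β ≤ 1) :
    rtr (R * R * cfc (fun x : ℝ => x ^ β) Y₂) ≤ rtr (R * R * cfc (fun x : ℝ => x ^ β) Y₁) := by
  have hle : Y₂ ≤ Y₁ := h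
  have key := CFC.rpow_le_rpow (p := β) ⟨hβ.le, hβ'⟩ hle
  rw [CFC.rpow_eq_cfc_real (Matrix.nonneg_iff_posSemidef.mpr h1),
    CFC.rpow_eq_cfc_real (Matrix.nonneg_iff_posSemidef.mpr h2), Matrix.le_iff] at key
  have h3 := (key.conjTranspose_mul_mul_same R).trace_nonneg
  rw [hR.eq, mul_sub, sub_mul, Matrix.trace_sub, Matrix.trace_mul_cycle,
    Matrix.trace_mul_cycle R (cfc _ Y₂)] at h3
  have h4 := (Complex.le_def.mp h3).1
  simp only [Complex.zero_re, Complex.sub_re] at h4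
  unfold rtr
  linarith

/-- Structure of the inverse square root. -/
lemma mpow_half (σ : Matrix k k ℂ) (hσ : σ.PosSemidef) :
    (mpow σ (-(1/2 : ℝ))).IsHermitian ∧ Commute σ (mpow σ (-(1/2 : ℝ))) ∧
    σ * (mpow σ (-(1/2 : ℝ)) * mpow σ (-(1/2 : ℝ)) * σ) = σ := by
  have hs : IsSelfAdjoint σ := hσ.1
  unfold mpow
  rw [matFun_eq_cfc _ _ hσ.1]
  set f : ℝ → ℝ := fun x => if x = 0 then 0 else x ^ (-(1/2 : ℝ))
  refine ⟨cfc_predicate f σ, ?_, ?_⟩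
  · exact (cfc_intertwine f σ σ σ hs hs rfl).symm
  · have hc := spec_cont f σ
    have hi : cfc (fun x : ℝ => x) σ = σ := cfc_id' ℝ σ
    calc σ * (cfc f σ * cfc f σ * σ)
        = cfc (fun x : ℝ => x * (f x * f x * x)) σ := by
          rw [cfc_mul _ _ σ (spec_cont _ _) (spec_cont _ _), 
            cfc_mul _ _ σ (spec_cont _ _) (spec_cont _ _), 
            cfc_mul _ _ σ (spec_cont _ _) (spec_cont _ _), hi]
      _ = cfc (fun x : ℝ => x) σ := by
          refine cfc_congr fun x hx => ?_
          have hx0 : 0 ≤ x := by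
            rw [hσ.1.spectrum_real_eq_range_eigenvalues] at hx
            obtain ⟨i, rfl⟩ := hx
            exact hσ.eigenvalues_nonneg i
          rcases hx0.eq_or_lt with h0 | h0
          · simp [← h0]
          · simp only [f, if_neg h0.ne']
            rw [← Real.rpow_add h0]
            norm_num
            rw [Real.rpow_neg_one, inv_mul_cancel₀ h0.ne', mul_one]
      _ = σ := hi

/-- `σ σ⁺ R = R` when the support of `R * R` is contained in that of `σ`. -/
lemma supp_mul (σ R : Matrix k k ℂ) (hσ : σ.PosSemidef) (hR : R.IsHermitian)
    (hs : SuppLE (R * R) σ) :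
    σ * (mpow σ (-(1/2 : ℝ)) * mpow σ (-(1/2 : ℝ))) * R = R := by
  obtain ⟨h1, h2, h3⟩ := mpow_half σ hσ
  set S := mpow σ (-(1/2 : ℝ))
  have h4 : σ * (S * S * σ - 1) = 0 := by rw [mul_sub, h3, mul_one, sub_self]
  have h5 : (R * R) * (S * S * σ - 1) = 0 := by
    ext i j
    have : σ.mulVec (fun i => (S * S * σ - 1) i j) = 0 := by
      ext i; exact congrFun (congrFun h4 i) j
    exact congrFun (hs _ this) i
  have h6 : R * (S * S * σ - 1) = 0 := by
    have : R.conjTranspose * R * (S * S * σ - 1) = 0 := by rw [hR.eq, h5]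
    exact (Matrix.conjTranspose_mul_self_mul_eq_zero _ _).mp this
  have h7 := congrArg Matrix.conjTranspose h6
  simp only [Matrix.conjTranspose_mul, Matrix.conjTranspose_sub, Matrix.conjTranspose_one,
    h1.eq, hR.eq, hσ.1.eq, Matrix.conjTranspose_zero, sub_mul, one_mul] at h7
  exact sub_eq_zero.mp h7

lemma trace_formula (σ R : Matrix k k ℂ) (hσ : σ.PosSemidef) (hR : R.IsHermitian)
    (hs : SuppLE (R * R) σ) {α : ℝ} (hα : 1 < α) :
    rtr (σ * mpow (mpow σ (-(1/2 : ℝ)) * (R * R) * mpow σ (-(1/2 : ℝ))) α) =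
    rtr (R * R * cfc (fun x : ℝ => x ^ (α - 1))
      (R * (mpow σ (-(1/2 : ℝ)) * mpow σ (-(1/2 : ℝ))) * R)) := by
  have h0 := supp_mul σ R hσ hR hs
  obtain ⟨h1, h2, h3⟩ := mpow_half σ hσ
  set S := mpow σ (-(1/2 : ℝ))
  set X := S * (R * R) * S with hXdef
  set Y := R * (S * S) * R with hYdef
  have hXp : X.PosSemidef := by
    have := Matrix.posSemidef_self_mul_conjTranspose (S * R)
    rw [Matrix.conjTranspose_mul, h1.eq, hR.eq] at this
    convert this using 1
    simp only [hXdef, mul_assoc]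
  have hX : IsSelfAdjoint X := hXp.1
  have hY : IsSelfAdjoint Y := by
    change Y.conjTranspose = Y
    simp only [hYdef, Matrix.conjTranspose_mul, h1.eq, hR.eq, mul_assoc]
  have hXA : X * (S * R) = (S * R) * Y := by simp only [hXdef, hYdef, mul_assoc]
  have hit := cfc_intertwine (fun x : ℝ => x ^ (α - 1)) X Y (S * R) hX hY hXA
  have e : mpow X α = cfc (fun x : ℝ => x ^ (α - 1)) X * X := by
    unfold mpow
    rw [matFun_eq_cfc _ _ hXp.1]
    have hi : cfc (fun x : ℝ => x) X = X := cfc_id' ℝ X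
    conv_rhs => rw [← hi, hi, ← hi]
    rw [hi]
    conv_rhs => arg 2; rw [← hi]
    rw [← cfc_mul _ _ X (spec_cont _ _) (spec_cont _ _)]
    refine cfc_congr fun x hx => ?_
    have hx0 : 0 ≤ x := by
      rw [hXp.1.spectrum_real_eq_range_eigenvalues] at hx
      obtain ⟨i, rfl⟩ := hx
      exact hXp.eigenvalues_nonneg i
    rcases hx0.eq_or_lt with h0 | h0
    · simp [← h0]
    · simp only [if_neg h0.ne']
      rw [Real.rpow_sub_one h0.ne', div_mul_cancel₀ _ h0.ne']
  set G := cfc (fun x : ℝ => x ^ (α - 1)) Y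
  have e2 : mpow X α = S * R * G * (R * S) := by
    rw [e, ← hit, hXdef]; simp only [mul_assoc]
  unfold rtr
  congr 1
  have e3 : S * σ * S * R = R := by
    rw [← h2.eq, mul_assoc σ]; exact h0
  calc (σ * mpow X α).trace = ((σ * S * R * G) * (R * S)).trace := by
        rw [e2]; simp only [mul_assoc]
    _ = (R * (S * σ * S * R) * G).trace := by
        rw [Matrix.trace_mul_comm]; simp only [mul_assoc]
    _ = (R * R * G).trace := by rw [e3]

lemma pinv_mono (σ₁ σ₂ R P₁ P₂ : Matrix k k ℂ) (h1 : σ₁.PosSemidef)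
    (h : (σ₂ - σ₁).PosSemidef) (h2 : σ₂.IsHermitian) (hR : R.IsHermitian)
    (hP1 : P₁.IsHermitian) (hP2 : P₂.IsHermitian)
    (e1 : σ₁ * P₁ * R = R) (e2 : σ₂ * P₂ * R = R) : (R * P₁ * R - R * P₂ * R).PosSemidef := by
  have a := h1.conjTranspose_mul_mul_same (P₁ * R - P₂ * R)
  have b := h.conjTranspose_mul_mul_same (P₂ * R)
  have e1' : R * P₁ * σ₁ = R := by
    have := congrArg Matrix.conjTranspose e1
    simpa only [Matrix.conjTranspose_mul, hR.eq, hP1.eq, h1.1.eq, ← mul_assoc] using this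
  convert a.add b using 1
  simp only [Matrix.conjTranspose_sub, Matrix.conjTranspose_mul, hR.eq, hP1.eq, hP2.eq]
  have t1 : (R * P₁ - R * P₂) * σ₁ * (P₁ * R - P₂ * R) =
      R * P₁ * R - R * P₂ * R - R * P₂ * R + R * P₂ * σ₁ * (P₂ * R) := by
    have x1 : R * P₁ * σ₁ * (P₁ * R) = R * P₁ * R := by rw [e1', mul_assoc]
    have x2 : R * P₁ * σ₁ * (P₂ * R) = R * P₂ * R := by rw [e1', mul_assoc]
    have x3 : R * P₂ * σ₁ * (P₁ * R) = R * P₂ * R := by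
      rw [mul_assoc (R * P₂), ← mul_assoc σ₁, e1]
    simp only [sub_mul, mul_sub, x1, x2, x3]
    abel
  have t2 : R * P₂ * (σ₂ - σ₁) * (P₂ * R) = R * P₂ * R - R * P₂ * σ₁ * (P₂ * R) := by
    have x4 : R * P₂ * σ₂ * (P₂ * R) = R * P₂ * R := by
      rw [mul_assoc (R * P₂), ← mul_assoc σ₂, e2]
    rw [mul_sub, sub_mul, x4]
  rw [t1, t2]
  abel

lemma suppLE_trans (ρ σ₁ σ₂ : Matrix k k ℂ) (h1 : σ₁.PosSemidef)
    (h : (σ₂ - σ₁).PosSemidef) (hs : SuppLE ρ σ₁) : SuppLE ρ σ₂ := by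
  intro v hv
  apply hs
  rw [← h1.dotProduct_mulVec_zero_iff]
  have a := h.dotProduct_mulVec_nonneg v
  have b := h1.dotProduct_mulVec_nonneg v
  rw [Matrix.sub_mulVec, hv, zero_sub, dotProduct_neg] at a
  exact le_antisymm (by simpa using a) b

lemma elog_mono {x y : ℝ} (h : x ≤ y) : elog x ≤ elog y := by
  unfold elog
  split_ifs with hx hy hy
  · exact le_rfl
  · exact bot_le
  · linarith
  · exact EReal.coe_le_coe_iff.mpr
      (Real.logb_le_logb_of_le (by norm_num) (not_le.mp hx) h)

end Helpers

/-- Anti-monotonicity of the geometric Rényi divergence in the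
second argument. -/
theorem geomRenyi_anti_mono {d : ℕ} (ρ σ₁ σ₂ : Matrix (Fin d) (Fin d) ℂ)
    (hρ : IsState ρ) (hσ₁ : σ₁.PosSemidef) (hσ₂ : σ₂.PosSemidef)
    (h12 : loewnerLE σ₁ σ₂) (α : ℝ) (hα : 1 < α ∧ α ≤ 2) :
    geomRenyi α ρ σ₂ ≤ geomRenyi α ρ σ₁ := by
  unfold geomRenyi
  by_cases hs1 : SuppLE ρ σ₁
  swap
  · rw [if_neg hs1]; exact le_top
  have hs2 := suppLE_trans ρ σ₁ σ₂ hσ₁ h12 hs1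
  rw [if_pos hs1, if_pos hs2]
  refine mul_le_mul_of_nonneg_left (elog_mono ?_)
    (EReal.coe_nonneg.mpr (inv_nonneg.mpr (by linarith [hα.1])))
  obtain ⟨R, hR, rfl⟩ : ∃ R : Matrix (Fin d) (Fin d) ℂ, R.IsHermitian ∧ ρ = R * R := by
    open scoped MatrixOrder in
    exact ⟨CFC.sqrt ρ, (Matrix.nonneg_iff_posSemidef.mp (CFC.sqrt_nonneg ρ)).1,
      (CFC.sqrt_mul_sqrt_self ρ (Matrix.nonneg_iff_posSemidef.mpr hρ.1)).symm⟩
  rw [trace_formula σ₁ R hσ₁ hR hs1 hα.1, trace_formula σ₂ R hσ₂ hR hs2 hα.1]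
  have hS1 := (mpow_half σ₁ hσ₁).1
  have hS2 := (mpow_half σ₂ hσ₂).1
  have psd : ∀ S : Matrix (Fin d) (Fin d) ℂ, S.IsHermitian →
      (S * S).IsHermitian ∧ (R * (S * S) * R).PosSemidef := by
    intro S hS
    constructor
    · change (S * S).conjTranspose = _
      rw [Matrix.conjTranspose_mul, hS.eq]
    · have := Matrix.posSemidef_conjTranspose_mul_self (S * R)
      rw [Matrix.conjTranspose_mul, hS.eq, hR.eq] at this
      simpa only [mul_assoc] using this
  exact rpow_mono hR (psd _ hS1).2 (psd _ hS2).2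
    (pinv_mono σ₁ σ₂ R _ _ hσ₁ h12 hσ₂.1 hR (psd _ hS1).1 (psd _ hS2).1
      (supp_mul σ₁ R hσ₁ hR hs1) (supp_mul σ₂ R hσ₂ hR hs2))
    (by linarith [hα.1]) (by linarith [hα.2])

end QCD
end
end

section
/- Separation of Rényi divergence and relative entropy finiteness (classical example): Define, for integers n ≥ 1, p_n := 2^{−n}·n^{−2} and r_n := 2^{−n}·n^{−2}·2^{−2^n}. Then (i) for every real α > 1 the series Σ_{n≥1} r_n·(p_n/r_n)^α = Σ_{n≥1} 2^{(α−1)·2^n − n}·n^{−2} diverges (is not summable), so the classical α-Rényi divergence of p relative to r is infinite for every α > 1; and (ii) the series Σ_{n≥1} p_n·log(p_n/r_n) = Σ_{n≥1} n^{−2} converges, so the classical relative entropy of p relative to r is finite. -/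
namespace ClassicalExample

/-- `p n = 2^{-n} n^{-2}`. -/
noncomputable def p (n : ℕ) : ℝ := 2 ^ (-(n : ℝ)) * (n : ℝ) ^ (-(2 : ℝ))

/-- `r n = 2^{-n} n^{-2} 2^{-2^n}`. -/
noncomputable def r (n : ℕ) : ℝ :=
  2 ^ (-(n : ℝ)) * (n : ℝ) ^ (-(2 : ℝ)) * 2 ^ (-((2 : ℝ) ^ (n : ℝ)))

theorem ratio_eq (n : ℕ) (hn : 1 ≤ n) : p n / r n = 2 ^ ((2 : ℝ) ^ (n : ℝ)) := by
  have hn0 : (0 : ℝ) < n := by exact_mod_cast hn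
  have h1 : (0 : ℝ) < 2 ^ (-(n : ℝ)) := by positivity
  have h2 : (0 : ℝ) < (n : ℝ) ^ (-(2 : ℝ)) := by positivity
  have h3 : (0 : ℝ) < 2 ^ ((2 : ℝ) ^ (n : ℝ)) := by positivity
  unfold p r
  rw [Real.rpow_neg (by norm_num : (0 : ℝ) ≤ 2) ((2 : ℝ) ^ (n : ℝ))]
  field_simp

theorem renyi_term (α : ℝ) (n : ℕ) (hn : 1 ≤ n) :
    r n * (p n / r n) ^ α
      = 2 ^ ((α - 1) * 2 ^ (n : ℝ) - (n : ℝ)) * (n : ℝ) ^ (-(2 : ℝ)) := by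
  rw [ratio_eq n hn, ← Real.rpow_mul (by norm_num)]
  unfold r
  have e : (α - 1) * 2 ^ (n : ℝ) - (n : ℝ)
      = -(n : ℝ) + (-((2 : ℝ) ^ (n : ℝ))) + (2 : ℝ) ^ (n : ℝ) * α := by ring
  rw [e, Real.rpow_add (by norm_num), Real.rpow_add (by norm_num)]
  ring

theorem relent_term (n : ℕ) (hn : 1 ≤ n) :
    p n * Real.logb 2 (p n / r n) = (n : ℝ) ^ (-(2 : ℝ)) := by
  rw [ratio_eq n hn, Real.logb_rpow (by norm_num) (by norm_num)]
  unfold p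
  rw [Real.rpow_neg (by norm_num : (0 : ℝ) ≤ 2) (n : ℝ)]
  have h3 : (0 : ℝ) < 2 ^ (n : ℝ) := by positivity
  field_simp

theorem term_ge (c : ℝ) (n : ℕ) (hn : 1 ≤ n) (h : (n : ℝ) / 2 ^ n < c / 3) :
    (1 : ℝ) ≤ 2 ^ (c * 2 ^ (n : ℝ) - (n : ℝ)) * (n : ℝ) ^ (-(2 : ℝ)) := by
  have hn0 : (0 : ℝ) < n := by exact_mod_cast hn
  have hlt : (n : ℝ) ≤ 2 ^ (n : ℝ) := by
    rw [Real.rpow_natCast]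
    exact_mod_cast (Nat.lt_two_pow_self (n := n)).le
  have h1 : (2 : ℝ) ^ (-(2 * (n : ℝ))) ≤ (n : ℝ) ^ (-(2 : ℝ)) := by
    have : (2 : ℝ) ^ (-(2 * (n : ℝ))) = ((2 : ℝ) ^ (n : ℝ)) ^ (-(2 : ℝ)) := by
      rw [← Real.rpow_mul (by norm_num)]
      congr 1
      ring
    rw [this]
    exact Real.rpow_le_rpow_of_nonpos hn0 hlt (by norm_num)
  rw [div_lt_iff₀ (by positivity)] at h
  calc (1 : ℝ) ≤ 2 ^ ((c * 2 ^ (n : ℝ) - (n : ℝ)) + (-(2 * (n : ℝ)))) := by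
        apply Real.one_le_rpow (by norm_num)
        rw [Real.rpow_natCast]
        linarith
    _ = 2 ^ (c * 2 ^ (n : ℝ) - (n : ℝ)) * 2 ^ (-(2 * (n : ℝ))) :=
        Real.rpow_add (by norm_num) _ _
    _ ≤ _ := by gcongr

/-- for every `α > 1` the series `Σ r n (p n / r n)^α =
Σ 2^{(α-1) 2^n - n} n^{-2}` diverges (so `D_α(p‖r) = ∞` for every `α > 1`),
while the series `Σ p n log₂(p n / r n) = Σ n^{-2}` converges
(so `D(p‖r) < ∞`). -/
theorem separation_renyi_relent :
    (∀ α : ℝ, 1 < α →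
      (∀ n : ℕ, 1 ≤ n →
        r n * (p n / r n) ^ α = 2 ^ ((α - 1) * 2 ^ (n : ℝ) - (n : ℝ)) * (n : ℝ) ^ (-(2 : ℝ))) ∧
      ¬ Summable (fun k : {n : ℕ // 1 ≤ n} => r k.1 * (p k.1 / r k.1) ^ α)) ∧
    ((∀ n : ℕ, 1 ≤ n → p n * Real.logb 2 (p n / r n) = (n : ℝ) ^ (-(2 : ℝ))) ∧
      Summable (fun k : {n : ℕ // 1 ≤ n} => p k.1 * Real.logb 2 (p k.1 / r k.1))) := by
  refine ⟨fun α hα => ⟨renyi_term α, fun hs => ?_⟩, relent_term, ?_⟩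
  · have hinj : Function.Injective (fun k : ℕ => (⟨k + 1, by omega⟩ : {n : ℕ // 1 ≤ n})) := by
      intro a b hab
      simpa using hab
    have ht := (hs.comp_injective hinj).tendsto_atTop_zero
    have hq := (Filter.tendsto_add_atTop_iff_nat 1).2
      (tendsto_pow_const_div_const_pow_of_one_lt 1 (by norm_num : (1 : ℝ) < 2))
    have e1 := ht.eventually (gt_mem_nhds (by norm_num : (0 : ℝ) < 1))
    have e2 := hq.eventually (gt_mem_nhds (by linarith : (0 : ℝ) < (α - 1) / 3))
    obtain ⟨k, hk1, hk2⟩ := (e1.and e2).exists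
    have hk := term_ge (α - 1) (k + 1) (by omega) (by simpa using hk2)
    rw [← renyi_term α (k + 1) (by omega)] at hk
    exact absurd hk1 (not_lt.2 hk)
  · have hs : Summable (fun n : ℕ => (n : ℝ) ^ (-(2 : ℝ))) :=
      Real.summable_nat_rpow.2 (by norm_num)
    have := hs.comp_injective (Subtype.val_injective (p := fun n : ℕ => 1 ≤ n))
    exact this.congr (fun k => (relent_term k.1 k.2).symm)

end ClassicalExample
end
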